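/- Let K be a number field, f ∈ O_K[X] monic squarefree of odd degree at least 3, and S a finite set of nonzero primes of O_K such that O := O_{K,S} is a PID; let δ be a density on O. Let A, B, C ∈ O[X] with B² − A·C = f, [A,2B,C] primitive over O[X], A coprime to f in K[X], and assume that the class of the ideal ⟨A, Y − B⟩ in Cl(K[X][Y]/⟨Y² − f⟩) is not a square (equivalently, there exist no ε ∈ Kˣ and p ∈ K[X] with f dividing A − ε·p²). Then the set of n ∈ O such that the specialized form [A(n), 2B(n), C(n)] is NOT GL₂ᵗʷ-equivalent over O to the principal form [1, 0, −f(n)] has density 1: δ({n ∈ O : [A(n),2B(n),C(n)] is not GL₂ᵗʷ-equivalent over O to [1,0,−f(n)]}) = 1. In particular there are infinitely many such n; these correspond to non-trivial specializations of the associated ideal class of Pic(O[X,Y]/⟨Y² − f⟩) in Pic(O[Y]/⟨Y² − f(n)⟩). -/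

import Mathlib

open Polynomial FractionalIdeal IsDedekindDomain NumberField

open scoped nonZeroDivisors

/-- The ring of `S`-integers of a number field `K`. -/
noncomputable abbrev SInt (K : Type*) [Field K] [NumberField K]
    (S : Finset (HeightOneSpectrum (𝓞 K))) : Type _ :=
  ((S : Set (HeightOneSpectrum (𝓞 K))).integer K)

/-- The coordinate ring `A_f := K[X][Y]/⟨Y² − f⟩` of the affine hyperelliptic
curve `Y² = f(X)`. -/
noncomputable def HypRing (K : Type*) [Field K] (f : K[X]) : Type _ :=
  Polynomial K[X] ⧸ Ideal.span {(X : Polynomial K[X]) ^ 2 - C f}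

noncomputable instance (K : Type*) [Field K] (f : K[X]) : CommRing (HypRing K f) :=
  Ideal.Quotient.commRing _

/-- The quotient map `K[X][Y] → A_f`. -/
noncomputable def HypRing.mk (K : Type*) [Field K] (f : K[X]) :
    Polynomial K[X] →+* HypRing K f :=
  Ideal.Quotient.mk _

/-- The ideal `⟨a, Y − b⟩` of `A_f`. -/
noncomputable def HypIdeal (K : Type*) [Field K] (f a b : K[X]) :
    Ideal (HypRing K f) :=
  Ideal.span {HypRing.mk K f (C a), HypRing.mk K f (X - C b)}

/-! Evaluating an equivalence of forms at `(1, 0)` shows that a trivial specialization at `n` gives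
`e * A(n) = u² - f(n) v²` for one of finitely many representatives `e` of the units of `O` modulo
squares, so it suffices that for each `e` the set of these `n` is null.

If `e * A` were a square modulo every irreducible factor of `f` over `K`, it would be congruent to a
square modulo `f`, and counting dimensions would give `u² - f v² = e A w²` in `K[X]` with `w ≠ 0`.
The ideal generated by `A w` and `(u - v Y) ⟨A, Y - B⟩` then has, up to a principal factor, the
square `⟨A, Y - B⟩`. Hence `e * A(θ)` is not a square in `L = K(θ)` for some root `θ` of `f`.

Comparing the simple poles at `1` of the zeta functions of `L` and of its quadratic extension by
`√(e A(θ))`, the primes `P` of `L` of prime norm `ℓ` for which `e * A(θ)` is not a square modulo `P`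
have divergent `∑ 1 / ℓ`. For such `P` no `n` in the set is congruent to `θ` modulo `P`: the set
misses a residue class modulo an ideal of `O` of index `ℓ`. By the Chinese remainder theorem its
density is at most `∏ (1 - 1 / ℓ) = 0`.
-/

section EulerSum

open scoped ENNReal

variable {T T' : Type*}

/-- The sum over all multisets of the products of weights: the expansion of the Euler product
`∏ t, (1 - w t)⁻¹`. Values in `ℝ≥0∞` make it available before any convergence is known. -/
noncomputable def eulerSum (w : T → ℝ≥0∞) : ℝ≥0∞ :=
  ∑' m : Multiset T, (m.map w).prod

theorem eulerSum_le_of_injective {w : T → ℝ≥0∞} {w' : T' → ℝ≥0∞} {i : T → T'}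
    (hi : Function.Injective i) (h : ∀ t, w t ≤ w' (i t)) : eulerSum w ≤ eulerSum w' :=
  calc eulerSum w ≤ ∑' m : Multiset T, ((m.map i).map w').prod :=
        ENNReal.tsum_le_tsum fun m ↦ by
          rw [Multiset.map_map]
          exact Multiset.prod_map_le_prod_map _ _ fun t _ ↦ h t
    _ ≤ eulerSum w' := ENNReal.tsum_comp_le_tsum_of_injective (Multiset.map_injective hi)
          fun m ↦ (m.map w').prod

theorem eulerSum_comp_equiv (e : T ≃ T') (w : T' → ℝ≥0∞) : eulerSum (w ∘ e) = eulerSum w :=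
  le_antisymm (eulerSum_le_of_injective e.injective fun _ ↦ le_rfl)
    (eulerSum_le_of_injective e.symm.injective fun t ↦ by simp)

theorem multiset_disjSum_bijective :
    Function.Bijective fun p : Multiset T × Multiset T' ↦ p.1.disjSum p.2 := by
  classical
  refine ⟨fun p q h ↦ Prod.ext ?_ ?_, fun m ↦ ?_⟩
  · ext t
    simpa [Multiset.disjSum, Multiset.count_map_eq_count' _ _ Sum.inl_injective] using
      congrArg (Multiset.count (Sum.inl t)) h
  · ext t
    simpa [Multiset.disjSum, Multiset.count_map_eq_count' _ _ Sum.inr_injective] using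
      congrArg (Multiset.count (Sum.inr t)) h
  · induction m using Multiset.induction_on with
    | empty => exact ⟨(0, 0), by simp⟩
    | cons a m ih =>
      obtain ⟨⟨x, y⟩, rfl⟩ := ih
      rcases a with a | a
      · exact ⟨(a ::ₘ x, y), by simp [Multiset.disjSum]⟩
      · exact ⟨(x, a ::ₘ y), by simp [Multiset.disjSum]⟩

theorem eulerSum_sumElim (w : T → ℝ≥0∞) (w' : T' → ℝ≥0∞) :
    eulerSum (Sum.elim w w') = eulerSum w * eulerSum w' := by
  unfold eulerSum
  rw [← (Equiv.ofBijective _ multiset_disjSum_bijective).tsum_eq, ENNReal.tsum_prod']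
  simp [Multiset.map_disjSum, ENNReal.tsum_mul_left, ENNReal.tsum_mul_right]

theorem eulerSum_eq_mul_compl (w : T → ℝ≥0∞) (H : Set T) :
    eulerSum w = eulerSum (fun t : H ↦ w t) * eulerSum fun t : (Hᶜ : Set T) ↦ w t := by
  classical
  rw [← eulerSum_sumElim, ← eulerSum_comp_equiv (Equiv.Set.sumCompl H)]
  congr 1
  ext (t | t) <;> simp

theorem eulerSum_sq_le_of_injective {w : T → ℝ≥0∞} {w' : T' → ℝ≥0∞} {H : Set T}
    {i : (Hᶜ : Set T) ⊕ (Hᶜ : Set T) → T'} (hi : Function.Injective i)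
    (h : ∀ t, w (Sum.elim (↑) (↑) t) ≤ w' (i t)) :
    eulerSum w ^ 2 ≤ eulerSum (fun t : H ↦ w t) ^ 2 * eulerSum w' := by
  rw [eulerSum_eq_mul_compl w H, mul_pow]
  gcongr
  rw [sq, ← eulerSum_sumElim]
  refine eulerSum_le_of_injective hi fun t ↦ ?_
  rcases t with t | t <;> exact h _

theorem ennreal_tsum_prod_fin (w : T → ℝ≥0∞) (n : ℕ) :
    ∑' v : Fin n → T, ∏ i, w (v i) = (∑' t, w t) ^ n := by
  induction n with
  | zero => simp
  | succ n ih =>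
    rw [← (Fin.consEquiv fun _ ↦ T).tsum_eq, ENNReal.tsum_prod', pow_succ', ← ih]
    simp [Fin.consEquiv, Fin.prod_univ_succ, ENNReal.tsum_mul_left, ENNReal.tsum_mul_right]

theorem eulerSum_le_tsum_pow (w : T → ℝ≥0∞) : eulerSum w ≤ ∑' k : ℕ, (∑' t, w t) ^ k := by
  let ofTuple : (Σ n, Fin n → T) → Multiset T := fun p ↦ (List.ofFn p.2 : Multiset T)
  have ofTuple_surjective : Function.Surjective ofTuple := fun m ↦ by
    induction m using Quotient.inductionOn with
    | h l => exact ⟨⟨l.length, l.get⟩, by simp [ofTuple]⟩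
  calc eulerSum w ≤ ∑' p, ((ofTuple p).map w).prod :=
        ENNReal.tsum_le_tsum_comp_of_surjective ofTuple_surjective _
    _ = ∑' k : ℕ, (∑' t, w t) ^ k := by
        rw [ENNReal.tsum_sigma']
        simp [ofTuple, List.prod_ofFn, List.map_ofFn, ← ennreal_tsum_prod_fin]

theorem eulerSum_lt_top_of_tsum_lt_one {w : T → ℝ≥0∞} (h : ∑' t, w t < 1) : eulerSum w < ⊤ := by
  refine (eulerSum_le_tsum_pow w).trans_lt ?_
  rw [ENNReal.tsum_geometric, lt_top_iff_ne_top, Ne, ENNReal.inv_eq_top]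
  exact (tsub_pos_of_lt h).ne'

theorem eulerSum_lt_top_of_finite [Finite T] {w : T → ℝ≥0∞} (hw : ∀ t, w t < 1) :
    eulerSum w < ⊤ := by
  induction T using Finite.induction_empty_option with
  | of_equiv e ih => exact eulerSum_comp_equiv e w ▸ ih fun t ↦ hw (e t)
  | h_empty => exact eulerSum_lt_top_of_tsum_lt_one (by simp)
  | h_option ih =>
    rename_i T _
    rw [← eulerSum_comp_equiv (Equiv.optionEquivSumPUnit.{0} T).symm,
      ← Sum.elim_comp_inl_inr (w ∘ _), eulerSum_sumElim]
    exact ENNReal.mul_lt_top (ih fun t ↦ hw _)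
      (eulerSum_lt_top_of_tsum_lt_one (by simpa using hw none))

theorem eulerSum_lt_top {w : T → ℝ≥0∞} (hw : ∀ t, w t < 1) (hsum : ∑' t, w t ≠ ⊤) :
    eulerSum w < ⊤ := by
  obtain ⟨F, hF⟩ :=
    ((ENNReal.tendsto_tsum_compl_atTop_zero hsum).eventually (gt_mem_nhds one_pos)).exists
  rw [eulerSum_eq_mul_compl w (F : Set T)]
  exact ENNReal.mul_lt_top (eulerSum_lt_top_of_finite fun t ↦ hw t)
    (eulerSum_lt_top_of_tsum_lt_one hF)

end EulerSum

section DedekindZeta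

open Filter Topology
open scoped ENNReal

variable (L : Type*) [Field L] [NumberField L]

/-- The Dedekind zeta function of `L` at a real number `s`, as an Euler sum over the primes. -/
noncomputable def zetaEulerSum (s : ℝ) : ℝ≥0∞ :=
  eulerSum fun P : HeightOneSpectrum (𝓞 L) ↦ .ofReal ((Ideal.absNorm P.asIdeal : ℝ) ^ (-s))

variable {L}

theorem two_le_absNorm (P : HeightOneSpectrum (𝓞 L)) : 2 ≤ Ideal.absNorm P.asIdeal := by
  have := Ideal.absNorm_eq_zero_iff.not.2 P.ne_bot
  have := Ideal.absNorm_eq_one_iff.not.2 P.isPrime.ne_top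
  lia

theorem prod_asIdeal_injective {R : Type*} [CommRing R] [IsDedekindDomain R] :
    Function.Injective fun m : Multiset (HeightOneSpectrum R) ↦
      (m.map HeightOneSpectrum.asIdeal).prod := by
  intro m m' h
  have factors_prod (m : Multiset (HeightOneSpectrum R)) :
      UniqueFactorizationMonoid.normalizedFactors (m.map HeightOneSpectrum.asIdeal).prod =
        m.map HeightOneSpectrum.asIdeal := by
    refine UniqueFactorizationMonoid.normalizedFactors_prod_of_prime fun p hp ↦ ?_
    obtain ⟨P, -, rfl⟩ := Multiset.mem_map.1 hp
    exact P.prime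
  refine Multiset.map_injective (fun _ _ ↦ HeightOneSpectrum.ext) ?_
  simpa only [factors_prod] using congrArg UniqueFactorizationMonoid.normalizedFactors h

theorem mem_range_prod_asIdeal {R : Type*} [CommRing R] [IsDedekindDomain R] {I : Ideal R}
    (hI : I ≠ ⊥) :
    I ∈ Set.range fun m : Multiset (HeightOneSpectrum R) ↦
      (m.map HeightOneSpectrum.asIdeal).prod := by
  refine ⟨(UniqueFactorizationMonoid.normalizedFactors I).pmap
    (fun p (hp : Prime p) ↦ ⟨p, Ideal.isPrime_of_prime hp, hp.ne_zero⟩)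
    fun p ↦ UniqueFactorizationMonoid.prime_of_normalized_factor p, ?_⟩
  simpa [Multiset.map_pmap, Multiset.pmap_eq_map] using Ideal.prod_normalizedFactors_eq_self hI

variable (L)

theorem zetaEulerSum_eq_tsum_ideal {s : ℝ} (hs : s ≠ 0) :
    zetaEulerSum L s = ∑' I : Ideal (𝓞 L), .ofReal ((Ideal.absNorm I : ℝ) ^ (-s)) := by
  have prod_weight (m : Multiset (HeightOneSpectrum (𝓞 L))) :
      (m.map fun P ↦ ENNReal.ofReal ((Ideal.absNorm P.asIdeal : ℝ) ^ (-s))).prod =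
        .ofReal ((Ideal.absNorm (m.map HeightOneSpectrum.asIdeal).prod : ℝ) ^ (-s)) := by
    induction m using Multiset.induction_on with
    | empty => simp
    | cons P m ih =>
      rw [Multiset.map_cons, Multiset.prod_cons, ih, ← ENNReal.ofReal_mul (by positivity),
        ← Real.mul_rpow (by positivity) (by positivity)]
      simp
  rw [zetaEulerSum, eulerSum, ← prod_asIdeal_injective.tsum_eq]
  · exact tsum_congr prod_weight
  · intro I hI
    refine mem_range_prod_asIdeal fun h ↦ hI ?_
    simp [h, Real.zero_rpow (neg_ne_zero.2 hs)]

theorem zetaEulerSum_eq_tsum_nat {s : ℝ} (hs : s ≠ 0) :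
    zetaEulerSum L s = ∑' n : ℕ,
      .ofReal (Nat.card {I : Ideal (𝓞 L) // Ideal.absNorm I = n} * (n : ℝ) ^ (-s)) := by
  rw [zetaEulerSum_eq_tsum_ideal L hs, ← (Equiv.sigmaFiberEquiv Ideal.absNorm).tsum_eq,
    ENNReal.tsum_sigma']
  refine tsum_congr fun n ↦ ?_
  have : Finite {I : Ideal (𝓞 L) // Ideal.absNorm I = n} :=
    (Ideal.finite_setOfPred_absNorm_eq n).to_subtype
  have norm_eq (I : {I : Ideal (𝓞 L) // Ideal.absNorm I = n}) :
      ENNReal.ofReal ((Ideal.absNorm (Equiv.sigmaFiberEquiv Ideal.absNorm ⟨n, I⟩) : ℝ) ^ (-s)) =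
        .ofReal ((n : ℝ) ^ (-s)) := by
    rw [Equiv.sigmaFiberEquiv_apply, I.2]
  rw [tsum_congr norm_eq, ENNReal.tsum_const, ENat.card_eq_coe_natCard,
    ENNReal.ofReal_mul (by positivity)]
  simp

theorem dedekindZeta_eq_ofReal_tsum {s : ℝ} (hs : s ≠ 0) :
    dedekindZeta L s = (∑' n : ℕ,
      Nat.card {I : Ideal (𝓞 L) // Ideal.absNorm I = n} * (n : ℝ) ^ (-s) : ℝ) := by
  rw [Complex.ofReal_tsum, dedekindZeta, LSeries]
  refine tsum_congr fun n ↦ ?_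
  rcases eq_or_ne n 0 with rfl | hn
  · simp [Real.zero_rpow (neg_ne_zero.2 hs)]
  · rw [LSeries.term_of_ne_zero hn, Complex.ofReal_mul, Complex.ofReal_cpow (by positivity)]
    push_cast
    rw [Complex.cpow_neg, div_eq_mul_inv]

theorem tendsto_sub_one_mul_zetaEulerSum :
    Tendsto (fun s : ℝ ↦ .ofReal (s - 1) * zetaEulerSum L s) (𝓝[>] 1)
      (𝓝 (.ofReal (dedekindZeta_residue L))) := by
  set term : ℝ → ℕ → ℝ := fun s n ↦
    Nat.card {I : Ideal (𝓞 L) // Ideal.absNorm I = n} * (n : ℝ) ^ (-s)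
  have tendsto_real : Tendsto (fun s : ℝ ↦ (s - 1) * ∑' n, term s n) (𝓝[>] 1)
      (𝓝 (dedekindZeta_residue L)) := by
    have := (Complex.continuous_re.tendsto _).comp (tendsto_sub_one_mul_dedekindZeta_nhdsGT L)
    simp only [Complex.ofReal_re] at this
    refine this.congr' ?_
    filter_upwards [self_mem_nhdsWithin] with s hs
    rw [Function.comp_apply, dedekindZeta_eq_ofReal_tsum L (zero_lt_one.trans hs).ne']
    norm_cast
  refine ((ENNReal.continuous_ofReal.tendsto _).comp tendsto_real).congr' ?_
  filter_upwards [self_mem_nhdsWithin,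
    tendsto_real.eventually (lt_mem_nhds (dedekindZeta_residue_pos L))] with s hs hpos
  -- a divergent real series has the junk sum `0`, which `hpos` excludes
  have hsum : Summable (term s) := by
    by_contra h
    simp [tsum_eq_zero_of_not_summable h] at hpos
  rw [Function.comp_apply, ENNReal.ofReal_mul (sub_nonneg.2 (le_of_lt hs)),
    zetaEulerSum_eq_tsum_nat L (zero_lt_one.trans hs).ne',
    ENNReal.ofReal_tsum_of_nonneg (fun n ↦ by positivity) hsum]

theorem not_forall_zetaEulerSum_sq_le (L' : Type*) [Field L'] [NumberField L'] {C : ℝ≥0∞}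
    (hC : C ≠ ⊤) : ¬ ∀ s : ℝ, 1 < s → zetaEulerSum L s ^ 2 ≤ C * zetaEulerSum L' s := by
  intro hle
  have sub_one_tendsto : Tendsto (fun s : ℝ ↦ ENNReal.ofReal (s - 1)) (𝓝[>] 1) (𝓝 0) := by
    refine Tendsto.mono_left ?_ nhdsWithin_le_nhds
    have : Continuous fun s : ℝ ↦ ENNReal.ofReal (s - 1) :=
      ENNReal.continuous_ofReal.comp (continuous_sub_right 1)
    simpa using this.tendsto 1
  have right_tendsto : Tendsto
      (fun s : ℝ ↦ C * (.ofReal (s - 1) * (.ofReal (s - 1) * zetaEulerSum L' s))) (𝓝[>] 1)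
      (𝓝 (C * (0 * .ofReal (dedekindZeta_residue L')))) :=
    ENNReal.Tendsto.const_mul (ENNReal.Tendsto.mul sub_one_tendsto (Or.inr ENNReal.ofReal_ne_top)
      (tendsto_sub_one_mul_zetaEulerSum L') (Or.inr ENNReal.zero_ne_top)) (Or.inr hC)
  have residue_sq_le := le_of_tendsto_of_tendsto
    (ENNReal.Tendsto.pow (n := 2) (tendsto_sub_one_mul_zetaEulerSum L)) right_tendsto (by
      filter_upwards [self_mem_nhdsWithin] with s hs
      calc (.ofReal (s - 1) * zetaEulerSum L s) ^ 2
          = .ofReal (s - 1) ^ 2 * zetaEulerSum L s ^ 2 := mul_pow _ _ _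
        _ ≤ .ofReal (s - 1) ^ 2 * (C * zetaEulerSum L' s) := by gcongr; exact hle s hs
        _ = _ := by ring)
  have residue_pos := dedekindZeta_residue_pos L
  simp only [zero_mul, mul_zero, nonpos_iff_eq_zero, pow_eq_zero_iff two_ne_zero,
    ENNReal.ofReal_eq_zero] at residue_sq_le
  linarith

end DedekindZeta

section InvNormSummable

open scoped ENNReal

variable {L : Type*} [Field L] [NumberField L] {H H' : Set (HeightOneSpectrum (𝓞 L))}

/-- A set of primes of `L` whose inverse norms have a finite sum: the exceptional sets that do not
affect the pole of the zeta function. -/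
def InvNormSummable (H : Set (HeightOneSpectrum (𝓞 L))) : Prop :=
  ∑' P : H, (Ideal.absNorm P.1.asIdeal : ℝ≥0∞)⁻¹ ≠ ⊤

theorem InvNormSummable.union (hH : InvNormSummable H) (hH' : InvNormSummable H') :
    InvNormSummable (H ∪ H') :=
  ne_top_of_le_ne_top (ENNReal.add_ne_top.2 ⟨hH, hH'⟩)
    (ENNReal.tsum_union_le (fun P : HeightOneSpectrum (𝓞 L) ↦
      (Ideal.absNorm P.asIdeal : ℝ≥0∞)⁻¹) H H')

theorem invNormSummable_of_finite (hH : H.Finite) : InvNormSummable H := by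
  have := hH.fintype
  rw [InvNormSummable, tsum_fintype]
  refine (ENNReal.sum_lt_top.2 fun P _ ↦ ENNReal.inv_lt_top.2 ?_).ne
  exact_mod_cast two_pos.trans_le (two_le_absNorm P.1)

theorem not_injective_of_absNorm_eq {L' : Type*} [Field L'] [NumberField L']
    (hH : InvNormSummable H) (i : (Hᶜ : Set _) ⊕ (Hᶜ : Set _) → HeightOneSpectrum (𝓞 L'))
    (hi : ∀ t, Ideal.absNorm (i t).asIdeal =
      Ideal.absNorm (Sum.elim (↑) (↑) t : HeightOneSpectrum (𝓞 L)).asIdeal) :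
    ¬ Function.Injective i := by
  intro i_injective
  set inv_norm : H → ℝ≥0∞ := fun P ↦ (Ideal.absNorm P.1.asIdeal : ℝ≥0∞)⁻¹ with inv_norm_def
  have hC : eulerSum inv_norm < ⊤ := eulerSum_lt_top (fun P ↦ by
    rw [inv_norm_def, ENNReal.inv_lt_one]
    exact_mod_cast two_le_absNorm P.1) hH
  refine not_forall_zetaEulerSum_sq_le L L' (ENNReal.pow_ne_top (n := 2) hC.ne) fun s hs ↦ ?_
  have weight_le (P : H) :
      ENNReal.ofReal ((Ideal.absNorm P.1.asIdeal : ℝ) ^ (-s)) ≤ inv_norm P := by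
    have one_le : (1 : ℝ) ≤ Ideal.absNorm P.1.asIdeal := by
      exact_mod_cast one_le_two.trans (two_le_absNorm P.1)
    calc ENNReal.ofReal ((Ideal.absNorm P.1.asIdeal : ℝ) ^ (-s))
        ≤ .ofReal ((Ideal.absNorm P.1.asIdeal : ℝ) ^ (-1 : ℝ)) := by gcongr
      _ = inv_norm P := by
        rw [Real.rpow_neg_one, ENNReal.ofReal_inv_of_pos (by linarith), ENNReal.ofReal_natCast]
  calc zetaEulerSum L s ^ 2
      ≤ eulerSum (fun P : H ↦ .ofReal ((Ideal.absNorm P.1.asIdeal : ℝ) ^ (-s))) ^ 2 *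
          zetaEulerSum L' s := eulerSum_sq_le_of_injective i_injective fun t ↦ by rw [hi t]
    _ ≤ eulerSum inv_norm ^ 2 * zetaEulerSum L' s := by
        gcongr
        exact eulerSum_le_of_injective Function.injective_id weight_le

end InvNormSummable

section Splitting

theorem comap_ne_of_sq_eq {R S : Type*} [CommRing R] [CommRing S] [Algebra R S] {τ : S ≃ₐ[R] S}
    {b : S} {α s : R} (hτ : τ b = -b) (hb : b ^ 2 = algebraMap R S α) {P : Ideal R} {Q : Ideal S}
    [Q.IsPrime] [Q.LiesOver P] (h2α : 2 * α ∉ P) (hs : α - s ^ 2 ∈ P) : Q.comap τ ≠ Q := by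
  intro hτQ
  have mem_iff (x : R) : algebraMap R S x ∈ Q ↔ x ∈ P := (Ideal.mem_of_liesOver Q P x).symm
  have conj_mem {x : S} (hx : x ∈ Q) : τ x ∈ Q := by rwa [← Ideal.mem_comap, hτQ]
  have mul_mem : (b - algebraMap R S s) * (b + algebraMap R S s) ∈ Q := by
    convert (mem_iff _).2 hs using 1
    rw [map_sub, map_pow, ← hb]
    ring
  have two_mul_mem : 2 * s ∈ P := by
    rw [← mem_iff]
    rcases Ideal.IsPrime.mem_or_mem ‹_› mul_mem with h | h
    · convert Q.neg_mem (Q.add_mem h (conj_mem h)) using 1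
      simp [hτ, two_mul]
    · convert Q.add_mem h (conj_mem h) using 1
      simp [hτ, two_mul]
      ring
  refine h2α ?_
  convert P.add_mem (P.mul_mem_left 2 hs) (P.mul_mem_left s two_mul_mem) using 1
  ring

variable {L L' : Type*} [Field L] [NumberField L] [Field L'] [NumberField L'] [Algebra L L']

theorem absNorm_eq_of_ne_of_finrank_eq_two (hdeg : Module.finrank L L' = 2) {P : Ideal (𝓞 L)}
    [P.IsMaximal] {Q Q' : Ideal (𝓞 L')} [Q.IsPrime] [Q.LiesOver P] [Q'.IsPrime]
    [Q'.LiesOver P] (hne : Q ≠ Q') : Ideal.absNorm Q = Ideal.absNorm P := by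
  have sum_eq := Ideal.sum_ramification_inertia_eq_finrank P (𝓞 L')
  rw [← IsFractionRing.finrank_eq (𝓞 L) L (𝓞 L') L', hdeg] at sum_eq
  have pair_le := (Finset.sum_le_univ_sum_of_nonneg (fun _ ↦ Nat.zero_le _)
    (s := {Ideal.primesOver.mk P Q, Ideal.primesOver.mk P Q'})).trans_eq sum_eq
  rw [Finset.sum_pair fun h ↦ hne (congrArg Subtype.val h)] at pair_le
  have inertiaDeg_eq_one : Q.inertiaDeg (𝓞 L) = 1 := by
    have := Nat.le_mul_of_pos_left (Q.inertiaDeg (𝓞 L)) (Q.ramificationIdx_pos (𝓞 L))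
    have := Nat.mul_pos (Q'.ramificationIdx_pos (𝓞 L)) (Q'.inertiaDeg_pos (𝓞 L))
    have := Q.inertiaDeg_pos (𝓞 L)
    simp only at pair_le
    lia
  rw [← Ideal.absNorm_pow_inertiaDeg P Q, inertiaDeg_eq_one, pow_one]

theorem exists_ne_absNorm_eq (hdeg : Module.finrank L L' = 2) {α : 𝓞 L} {β : L'}
    (hβ : β ^ 2 = algebraMap L L' α) {σ : L' ≃ₐ[L] L'} (hσ : σ β = -β)
    {P : HeightOneSpectrum (𝓞 L)} (h2α : 2 * α ∉ P.asIdeal) {s : 𝓞 L}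
    (hs : α - s ^ 2 ∈ P.asIdeal) :
    ∃ Q Q' : HeightOneSpectrum (𝓞 L'), Q ≠ Q' ∧
      (Q.asIdeal.under (𝓞 L) = P.asIdeal ∧ Ideal.absNorm Q.asIdeal = Ideal.absNorm P.asIdeal) ∧
      Q'.asIdeal.under (𝓞 L) = P.asIdeal ∧ Ideal.absNorm Q'.asIdeal = Ideal.absNorm P.asIdeal := by
  have := P.isMaximal
  have hβ_int : IsIntegral ℤ β :=
    .of_pow two_pos (hβ ▸ map_isIntegral_int (algebraMap L L') (RingOfIntegers.isIntegral_coe α))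
  let b : 𝓞 L' := ⟨β, hβ_int⟩
  let τ : 𝓞 L' ≃ₐ[𝓞 L] 𝓞 L' := RingOfIntegers.mapAlgEquiv σ
  obtain ⟨Q, _, _⟩ := Ideal.nonempty_primesOver (S := 𝓞 L') (P := P.asIdeal)
  have : (Q.comap τ).IsPrime := Ideal.comap_isPrime τ Q
  have conj_ne : Q.comap τ ≠ Q := comap_ne_of_sq_eq (τ := τ) (b := b) (RingOfIntegers.ext hσ)
    (RingOfIntegers.ext hβ) h2α hs
  have ne_bot (R : Ideal (𝓞 L')) [R.LiesOver P.asIdeal] : R ≠ ⊥ :=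
    Ideal.ne_bot_of_liesOver_of_ne_bot P.ne_bot R
  exact ⟨⟨Q, ‹_›, ne_bot Q⟩, ⟨Q.comap τ, ‹_›, ne_bot _⟩,
    fun h ↦ conj_ne (congrArg HeightOneSpectrum.asIdeal h).symm,
    ⟨(Q.over_def P.asIdeal).symm, absNorm_eq_of_ne_of_finrank_eq_two hdeg conj_ne.symm⟩,
    ((Q.comap τ).over_def P.asIdeal).symm, absNorm_eq_of_ne_of_finrank_eq_two hdeg conj_ne⟩

theorem exists_finrank_eq_two_of_not_isSquare.{u} {L : Type u} [Field L] {α : L}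
    (hα : ¬ IsSquare α) :
    ∃ (L' : Type u) (_ : Field L') (_ : Algebra L L') (β : L') (σ : L' ≃ₐ[L] L'),
      Module.finrank L L' = 2 ∧ β ^ 2 = algebraMap L L' α ∧ σ β = -β := by
  have hq : Irreducible (X ^ 2 - C α : L[X]) :=
    X_pow_sub_C_irreducible_of_prime Nat.prime_two fun x hx ↦ hα ⟨x, by rw [← hx, sq]⟩
  have : Fact (Irreducible (X ^ 2 - C α : L[X])) := ⟨hq⟩
  have : Module.Finite L (AdjoinRoot (X ^ 2 - C α)) := (AdjoinRoot.powerBasis hq.ne_zero).finite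
  have root_sq : AdjoinRoot.root (X ^ 2 - C α) ^ 2 = algebraMap L _ α := by
    have := AdjoinRoot.eval₂_root (X ^ 2 - C α)
    rw [eval₂_sub, eval₂_X_pow, eval₂_C] at this
    exact sub_eq_zero.1 this
  let conj : AdjoinRoot (X ^ 2 - C α) →ₐ[L] AdjoinRoot (X ^ 2 - C α) :=
    AdjoinRoot.liftAlgHom _ (Algebra.ofId L _) (-AdjoinRoot.root _) (by
      simp [eval₂_sub, root_sq])
  refine ⟨AdjoinRoot (X ^ 2 - C α), inferInstance, inferInstance, AdjoinRoot.root _,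
    .ofBijective conj (Algebra.IsAlgebraic.algHom_bijective conj), ?_, root_sq, by simp [conj]⟩
  rw [(AdjoinRoot.powerBasis hq.ne_zero).finrank, AdjoinRoot.powerBasis_dim, natDegree_X_pow_sub_C]

theorem isSquare_of_forall_isSquare_mod {L : Type*} [Field L] [NumberField L] {α : 𝓞 L}
    {H : Set (HeightOneSpectrum (𝓞 L))} (hH : InvNormSummable H)
    (h : ∀ P ∉ H, 2 * α ∉ P.asIdeal ∧ ∃ s : 𝓞 L, α - s ^ 2 ∈ P.asIdeal) : IsSquare (α : L) := by
  by_contra hα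
  obtain ⟨L', _, _, β, σ, hdeg, hβ, hσ⟩ := exists_finrank_eq_two_of_not_isSquare hα
  have : Module.Finite L L' := Module.finite_of_finrank_pos (by lia)
  have : NumberField L' := NumberField.of_module_finite L L'
  have two_above (P : (Hᶜ : Set (HeightOneSpectrum (𝓞 L)))) :=
    exists_ne_absNorm_eq hdeg hβ hσ (h P P.2).1 (h P P.2).2.choose_spec
  choose Q Q' hne hQ hQ' using two_above
  have eq_of_under_eq {P P' : (Hᶜ : Set (HeightOneSpectrum (𝓞 L)))}
      {R R' : HeightOneSpectrum (𝓞 L')} (hR : R.asIdeal.under (𝓞 L) = P.1.asIdeal)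
      (hR' : R'.asIdeal.under (𝓞 L) = P'.1.asIdeal) (hRR' : R = R') : P = P' :=
    Subtype.ext (HeightOneSpectrum.ext (by rw [← hR, ← hR', hRR']))
  refine not_injective_of_absNorm_eq hH (Sum.elim Q Q') ?_ (Function.Injective.sumElim
    (fun P P' ↦ eq_of_under_eq (hQ P).1 (hQ P').1)
    (fun P P' ↦ eq_of_under_eq (hQ' P).1 (hQ' P').1) fun P P' hPP' ↦ ?_)
  · rintro (P | P)
    exacts [(hQ P).2, (hQ' P).2]
  · obtain rfl := eq_of_under_eq (hQ P).1 (hQ' P').1 hPP'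
    exact hne P hPP'

end Splitting

section ResidueCharacteristic

open scoped ENNReal

variable {L : Type*} [Field L] [NumberField L]

/-- The residue characteristic of `P`: the rational prime below `P`. -/
noncomputable def residueChar (P : HeightOneSpectrum (𝓞 L)) : Nat.Primes :=
  have := P.isPrime
  have : NeZero P.asIdeal := ⟨P.ne_bot⟩
  ⟨Ideal.absNorm (P.asIdeal.under ℤ), Nat.absNorm_under_prime P.asIdeal⟩

theorem exists_absNorm_eq_residueChar_pow (P : HeightOneSpectrum (𝓞 L)) :
    ∃ j ≠ 0, Ideal.absNorm P.asIdeal = (residueChar P : ℕ) ^ j :=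
  have := P.isPrime
  ⟨_, (P.asIdeal.inertiaDeg_pos ℤ).ne', (Ideal.absNorm_pow_inertiaDeg _ P.asIdeal).symm⟩

theorem encard_residueChar_preimage_le (ℓ : Nat.Primes) :
    (residueChar ⁻¹' {ℓ} : Set (HeightOneSpectrum (𝓞 L))).encard ≤ Module.finrank ℚ L := by
  have : Fact (ℓ : ℕ).Prime := ⟨ℓ.2⟩
  have maps_to : Set.MapsTo HeightOneSpectrum.asIdeal
      (residueChar ⁻¹' {ℓ} : Set (HeightOneSpectrum (𝓞 L)))
      ((Ideal.span {((ℓ : ℕ) : ℤ)}).primesOver (𝓞 L)) := by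
    rintro P rfl
    exact ⟨P.isPrime, Int.liesOver_span_absNorm P.asIdeal⟩
  calc (residueChar ⁻¹' {ℓ} : Set (HeightOneSpectrum (𝓞 L))).encard
      ≤ ((Ideal.span {((ℓ : ℕ) : ℤ)}).primesOver (𝓞 L)).encard :=
        Set.encard_le_encard_of_injOn maps_to fun _ _ _ _ ↦ HeightOneSpectrum.ext
    _ = Fintype.card ((Ideal.span {((ℓ : ℕ) : ℤ)}).primesOver (𝓞 L)) := by
        rw [← Set.coe_fintypeCard]
    _ ≤ Module.finrank ℚ L := by
        rw [← RingOfIntegers.rank L,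
          ← Ideal.sum_ramification_inertia_eq_finrank (Ideal.span {((ℓ : ℕ) : ℤ)}) (𝓞 L),
          Fintype.card_eq_sum_ones]
        refine Nat.cast_le.2 (Finset.sum_le_sum fun Q _ ↦ ?_)
        have := Q.2.1
        exact Nat.mul_pos (Q.1.ramificationIdx_pos ℤ) (Q.1.inertiaDeg_pos ℤ)

theorem tsum_residueChar_le (w : Nat.Primes → ℝ≥0∞) :
    ∑' P : HeightOneSpectrum (𝓞 L), w (residueChar P) ≤ Module.finrank ℚ L * ∑' ℓ, w ℓ := by
  rw [← ENNReal.tsum_fiberwise _ residueChar, ← ENNReal.tsum_mul_left]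
  refine ENNReal.tsum_le_tsum fun ℓ ↦ ?_
  calc ∑' P : (residueChar ⁻¹' {ℓ} : Set (HeightOneSpectrum (𝓞 L))), w (residueChar P.1)
      = ∑' _ : (residueChar ⁻¹' {ℓ} : Set (HeightOneSpectrum (𝓞 L))), w ℓ :=
        tsum_congr fun P ↦ congrArg w P.2
    _ = (residueChar ⁻¹' {ℓ} : Set (HeightOneSpectrum (𝓞 L))).encard * w ℓ := ENNReal.tsum_const _
    _ ≤ Module.finrank ℚ L * w ℓ := by
        gcongr
        exact_mod_cast ENat.toENNReal_le.2 (encard_residueChar_preimage_le ℓ)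

theorem invNormSummable_of_inv_absNorm_le {H : Set (HeightOneSpectrum (𝓞 L))}
    {w : Nat.Primes → ℝ≥0∞} (hw : ∑' ℓ, w ℓ ≠ ⊤)
    (h : ∀ P ∈ H, (Ideal.absNorm P.asIdeal : ℝ≥0∞)⁻¹ ≤ w (residueChar P)) : InvNormSummable H :=
  ne_top_of_le_ne_top (ENNReal.mul_ne_top (ENNReal.natCast_ne_top _) hw) <|
    calc ∑' P : H, (Ideal.absNorm P.1.asIdeal : ℝ≥0∞)⁻¹
        ≤ ∑' P : H, w (residueChar P.1) := ENNReal.tsum_le_tsum fun P ↦ h P P.2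
      _ ≤ ∑' P : HeightOneSpectrum (𝓞 L), w (residueChar P) :=
        ENNReal.tsum_comp_le_tsum_of_injective Subtype.val_injective _
      _ ≤ _ := tsum_residueChar_le w

theorem invNormSummable_setOf_le {I : Ideal (𝓞 L)} (hI : I ≠ ⊥) :
    InvNormSummable {P : HeightOneSpectrum (𝓞 L) | I ≤ P.asIdeal} :=
  invNormSummable_of_finite ((Ideal.finite_factors hI).subset fun _ ↦ Ideal.dvd_iff_le.2)

theorem invNormSummable_setOf_not_prime :
    InvNormSummable {P : HeightOneSpectrum (𝓞 L) | ¬ (Ideal.absNorm P.asIdeal).Prime} := by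
  have inv_sq_summable : ∑' ℓ : Nat.Primes, (((ℓ : ℕ) : ℝ≥0∞) ^ 2)⁻¹ < ⊤ :=
    calc ∑' ℓ : Nat.Primes, (((ℓ : ℕ) : ℝ≥0∞) ^ 2)⁻¹
        = ∑' ℓ : Nat.Primes, ENNReal.ofReal (((ℓ : ℕ) : ℝ) ^ 2)⁻¹ := tsum_congr fun ℓ ↦ by
          have : (0 : ℝ) < (ℓ : ℕ) := by exact_mod_cast ℓ.2.pos
          rw [ENNReal.ofReal_inv_of_pos (by positivity), ENNReal.ofReal_pow this.le,
            ENNReal.ofReal_natCast]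
      _ ≤ ∑' n : ℕ, ENNReal.ofReal ((n : ℝ) ^ 2)⁻¹ :=
        ENNReal.tsum_comp_le_tsum_of_injective Nat.Primes.coe_nat_injective _
      _ < ⊤ := (Real.summable_nat_pow_inv.2 one_lt_two).tsum_ofReal_lt_top
  refine invNormSummable_of_inv_absNorm_le inv_sq_summable.ne fun P hP ↦ ?_
  obtain ⟨j, hj, hnorm⟩ := exists_absNorm_eq_residueChar_pow P
  have two_le : 2 ≤ j := by
    refine (Nat.two_le_iff j).2 ⟨hj, ?_⟩
    rintro rfl
    exact hP (by rw [hnorm, pow_one]; exact (residueChar P).2)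
  rw [ENNReal.inv_le_inv, hnorm]
  exact_mod_cast Nat.pow_le_pow_right (residueChar P).2.pos two_le

theorem invNormSummable_setOf_residueChar_mem {Λ : Set Nat.Primes}
    (hΛ : ∑' ℓ : Λ, ((ℓ.1 : ℕ) : ℝ≥0∞)⁻¹ ≠ ⊤) :
    InvNormSummable {P : HeightOneSpectrum (𝓞 L) | residueChar P ∈ Λ} := by
  rw [tsum_subtype Λ fun ℓ ↦ ((ℓ : ℕ) : ℝ≥0∞)⁻¹] at hΛ
  refine invNormSummable_of_inv_absNorm_le hΛ fun P hP ↦ ?_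
  obtain ⟨j, hj, hnorm⟩ := exists_absNorm_eq_residueChar_pow P
  rw [Set.indicator_of_mem (s := Λ) hP, ENNReal.inv_le_inv, hnorm]
  exact_mod_cast Nat.le_self_pow hj _

end ResidueCharacteristic

section SUnits

theorem finite_quotient_range_powMonoidHom {G : Type*} [CommGroup G] [Group.FG G] {n : ℕ}
    (hn : n ≠ 0) : Finite (G ⧸ (powMonoidHom n : G →* G).range) :=
  CommGroup.finite_of_fg_isMulTorsion _ fun x ↦ by
    obtain ⟨g, rfl⟩ := QuotientGroup.mk_surjective x
    exact isOfFinOrder_iff_pow_eq_one.2 ⟨n, Nat.pos_of_ne_zero hn, by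
      rw [← QuotientGroup.mk_pow, QuotientGroup.eq_one_iff]
      exact ⟨g, rfl⟩⟩

variable {K : Type*} [Field K] [NumberField K] {S : Finset (HeightOneSpectrum (𝓞 K))}

theorem exists_algebraMap_eq_of_valuation_le_one {x : SInt K S}
    (hx : ∀ v ∈ S, v.valuation K (x : K) ≤ 1) : ∃ y, algebraMap (𝓞 K) (SInt K S) y = x := by
  obtain ⟨y, hy⟩ := HeightOneSpectrum.mem_integers_of_valuation_le_one K (x : K) fun v ↦
    (em (v ∈ S)).elim (hx v) (x.2 v)
  exact ⟨y, Subtype.ext hy⟩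

theorem exists_unitsMap_eq_of_valuation_eq_one {u : (SInt K S)ˣ}
    (hu : ∀ v ∈ S, v.valuation K ((u : SInt K S) : K) = 1) :
    ∃ w, Units.map (algebraMap (𝓞 K) (SInt K S)).toMonoidHom w = u := by
  have mul_inv : ((u : SInt K S) : K) * ((u⁻¹ : (SInt K S)ˣ) : SInt K S) = 1 :=
    congrArg Subtype.val u.mul_inv
  have inv_le (v) (hv : v ∈ S) : v.valuation K (((u⁻¹ : (SInt K S)ˣ) : SInt K S) : K) ≤ 1 := by
    have := congrArg (v.valuation K) mul_inv
    rw [map_mul, hu v hv, one_mul, map_one] at this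
    exact this.le
  obtain ⟨y, hy⟩ := exists_algebraMap_eq_of_valuation_le_one fun v hv ↦ (hu v hv).le
  obtain ⟨z, hz⟩ := exists_algebraMap_eq_of_valuation_le_one inv_le
  have mul_eq_one : y * z = 1 := by
    apply FaithfulSMul.algebraMap_injective (𝓞 K) (SInt K S)
    rw [map_mul, hy, hz, map_one, Units.mul_inv]
  exact ⟨⟨y, z, mul_eq_one, by rw [mul_comm, mul_eq_one]⟩, Units.ext hy⟩

variable (K S) in
/-- The vector of `S`-adic valuations of an `S`-unit. -/
noncomputable def sUnitValuation : (SInt K S)ˣ →* (S → Multiplicative ℤ) :=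
  MonoidHom.pi fun v ↦
    (v.1.valuationOfNeZero (K := K)).comp (Units.map (algebraMap (SInt K S) K).toMonoidHom)

theorem range_unitsMap_eq_ker_sUnitValuation :
    (Units.map (algebraMap (𝓞 K) (SInt K S)).toMonoidHom).range = (sUnitValuation K S).ker := by
  refine le_antisymm ?_ fun u hu ↦ exists_unitsMap_eq_of_valuation_eq_one fun v hv ↦ ?_
  · rintro _ ⟨w, rfl⟩
    exact funext fun v ↦ v.1.valuation_of_unit_eq w
  · have : v.valuationOfNeZero (Units.map (algebraMap (SInt K S) K).toMonoidHom u) = 1 :=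
      congrFun hu ⟨v, hv⟩
    exact (v.valuationOfNeZero_eq _).symm.trans (congrArg _ this)

instance fg_units_sInt : Group.FG (SInt K S)ˣ := by
  have : IsNoetherian ℤ (Additive (S → Multiplicative ℤ)) :=
    inferInstanceAs (IsNoetherian ℤ (S → ℤ))
  have range_eq_ker := congrArg (Subgroup.toAddSubgroup)
    (range_unitsMap_eq_ker_sUnitValuation (K := K) (S := S))
  have := isNoetherian_of_range_eq_ker
    (MonoidHom.toAdditive
      (Units.map (algebraMap (𝓞 K) (SInt K S)).toMonoidHom)).toIntLinearMap
    (MonoidHom.toAdditive (sUnitValuation K S)).toIntLinearMap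
    (SetLike.ext fun x ↦ SetLike.ext_iff.1 range_eq_ker x)
  exact GroupFG.iff_add_fg.2 (Module.Finite.iff_addGroup_fg.1 inferInstance)

end SUnits

section Density

open scoped ENNReal

/-- A density on a commutative ring `O`: a monotone, subadditive, translation invariant map from
the subsets of `O` to `[0, 1]` giving `O` the value `1` and a nonzero ideal `I` the value
`1 / |O ⧸ I|`. Ideals of infinite index get the value `0`, since then `Nat.card (O ⧸ I) = 0`. -/
structure IsDensity {O : Type*} [CommRing O] (δ : Set O → ℝ) : Prop where
  mem_unitInterval : ∀ P, 0 ≤ δ P ∧ δ P ≤ 1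
  univ : δ Set.univ = 1
  mono : ∀ P Q, P ⊆ Q → δ P ≤ δ Q
  union_le : ∀ P Q, δ (P ∪ Q) ≤ δ P + δ Q
  translate : ∀ (α : O) (P : Set O), δ ((α + ·) '' P) = δ P
  ideal : ∀ I : Ideal O, I ≠ ⊥ → δ (I : Set O) = 1 / (Nat.card (O ⧸ I) : ℝ)

/-- The primes `ℓ` for which a subset `T` of `O` avoids some residue class modulo some ideal of
index `ℓ`. A set that avoids many residue classes is sparse, by the Chinese remainder theorem. -/
def missedPrimes {O : Type*} [CommRing O] (T : Set O) : Set Nat.Primes :=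
  {ℓ | ∃ q : Ideal O, Nat.card (O ⧸ q) = ℓ ∧ ∃ r, ∀ n ∈ T, n - r ∉ q}

variable {O : Type*} [CommRing O] {δ : Set O → ℝ} {T : Set O}

namespace IsDensity

theorem nonneg (hδ : IsDensity δ) (P : Set O) : 0 ≤ δ P := (hδ.mem_unitInterval P).1

theorem biUnion_le (hδ : IsDensity δ) {ι : Type*} {s : Finset ι} (hs : s.Nonempty)
    (P : ι → Set O) : δ (⋃ i ∈ s, P i) ≤ ∑ i ∈ s, δ (P i) := by
  classical
  induction hs using Finset.Nonempty.cons_induction with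
  | singleton a => simp
  | cons a s ha _ ih =>
    rw [Finset.cons_eq_insert, Finset.set_biUnion_insert, Finset.sum_insert ha]
    exact (hδ.union_le _ _).trans (by gcongr)

theorem iUnion_eq_zero (hδ : IsDensity δ) {ι : Type*} [Finite ι] [Nonempty ι] {P : ι → Set O}
    (h : ∀ i, δ (P i) = 0) : δ (⋃ i, P i) = 0 := by
  have := Fintype.ofFinite ι
  refine le_antisymm ?_ (hδ.nonneg _)
  simpa [h] using hδ.biUnion_le Finset.univ_nonempty P

theorem compl_eq_one (hδ : IsDensity δ) (hT : δ T = 0) : δ Tᶜ = 1 := by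
  refine le_antisymm (hδ.mem_unitInterval _).2 ?_
  simpa [hT, hδ.univ] using hδ.union_le T Tᶜ

theorem infinite_of_ne_zero (hδ : IsDensity δ) (hsingleton : ∀ x, δ {x} = 0) (hT : δ T ≠ 0) :
    T.Infinite := by
  intro hfin
  have := (hfin.insert 0).to_subtype
  have subset_iUnion : T ⊆ ⋃ x : ↥(insert 0 T), {x.1} := fun x hx ↦
    Set.mem_iUnion.2 ⟨⟨x, Set.mem_insert_of_mem 0 hx⟩, rfl⟩
  exact hT <| le_antisymm
    ((hδ.mono _ _ subset_iUnion).trans_eq (hδ.iUnion_eq_zero fun x ↦ hsingleton x)) (hδ.nonneg T)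

theorem le_ncard_div_card (hδ : IsDensity δ) {I : Ideal O} (hI : I ≠ ⊥) [Finite (O ⧸ I)]
    (hT : T.Nonempty) :
    δ T ≤ (Ideal.Quotient.mk I '' T).ncard / (Nat.card (O ⧸ I) : ℝ) := by
  have hfin : (Ideal.Quotient.mk I '' T).Finite := Set.toFinite _
  have subset_biUnion : T ⊆ ⋃ w ∈ hfin.toFinset, (Quotient.out w + ·) '' (I : Set O) := by
    intro n hn
    refine Set.mem_biUnion (x := Ideal.Quotient.mk I n) (by simpa using ⟨n, hn, rfl⟩) ?_
    refine ⟨n - Quotient.out (Ideal.Quotient.mk I n), ?_, add_sub_cancel _ _⟩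
    exact Ideal.Quotient.eq.1 (Quotient.out_eq _).symm
  have nonempty : hfin.toFinset.Nonempty := by simpa using hT
  calc δ T ≤ ∑ w ∈ hfin.toFinset, δ ((Quotient.out w + ·) '' (I : Set O)) :=
        (hδ.mono _ _ subset_biUnion).trans (hδ.biUnion_le nonempty _)
    _ = (Ideal.Quotient.mk I '' T).ncard / (Nat.card (O ⧸ I) : ℝ) := by
        simp only [hδ.translate, hδ.ideal I hI, Finset.sum_const, nsmul_eq_mul, mul_one_div,
          Set.ncard_eq_toFinset_card _ hfin]

theorem le_prod_of_pairwise_isCoprime [Infinite O] (hδ : IsDensity δ) (hT : T.Nonempty)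
    {ι : Type*} [Fintype ι] {q : ι → Ideal O} [∀ i, Finite (O ⧸ q i)]
    (hq : Pairwise (Function.onFun IsCoprime q)) {r : ι → O} (hr : ∀ i, ∀ n ∈ T, n - r i ∉ q i) :
    δ T ≤ ∏ i, (1 - (Nat.card (O ⧸ q i) : ℝ)⁻¹) := by
  classical
  let e := Ideal.quotientInfRingEquivPiQuotient q hq
  have : Finite (O ⧸ ⨅ i, q i) := Finite.of_equiv _ e.symm.toEquiv
  have iInf_ne_bot : ⨅ i, q i ≠ ⊥ := fun h ↦ by
    rw [h] at this
    exact not_finite_iff_infinite.2 ‹Infinite O›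
      (Finite.of_equiv _ (RingEquiv.quotientBot O).toEquiv)
  have ncard_le : (Ideal.Quotient.mk (⨅ i, q i) '' T).ncard ≤ ∏ i, (Nat.card (O ⧸ q i) - 1) := by
    calc _ ≤ (Set.univ.pi fun i ↦ {Ideal.Quotient.mk (q i) (r i)}ᶜ).ncard := by
          refine Set.ncard_le_ncard_of_injOn e ?_ e.injective.injOn (Set.toFinite _)
          rintro _ ⟨n, hn, rfl⟩ i -
          exact fun h ↦ hr i n hn (Ideal.Quotient.eq.1 h)
      _ = _ := by
          rw [← Nat.card_coe_set_eq, Nat.card_congr (Equiv.Set.univPi _), Nat.card_pi]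
          refine Finset.prod_congr rfl fun i _ ↦ ?_
          rw [Nat.card_coe_set_eq, Set.ncard_compl, Set.ncard_singleton]
  calc δ T ≤ _ := hδ.le_ncard_div_card iInf_ne_bot hT
    _ ≤ (∏ i, (Nat.card (O ⧸ q i) - 1) : ℕ) / (∏ i, Nat.card (O ⧸ q i) : ℕ) := by
        rw [Nat.card_congr e.toEquiv, Nat.card_pi]
        gcongr
    _ = ∏ i, (1 - (Nat.card (O ⧸ q i) : ℝ)⁻¹) := by
        push_cast
        rw [← Finset.prod_div_distrib]
        refine Finset.prod_congr rfl fun i _ ↦ ?_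
        rw [Nat.cast_sub Finite.card_pos, Nat.cast_one, sub_div,
          div_self (Nat.cast_ne_zero.2 Finite.card_pos.ne'), one_div]

end IsDensity

theorem natCast_card_quotient_mem (I : Ideal O) : (Nat.card (O ⧸ I) : O) ∈ I := by
  have := I.toAddSubgroup.nsmul_index_mem (1 : O)
  rwa [nsmul_one] at this

theorem isCoprime_of_coprime_card_quotient {I J : Ideal O}
    (h : (Nat.card (O ⧸ I)).Coprime (Nat.card (O ⧸ J))) : IsCoprime I J := by
  obtain ⟨a, b, hab⟩ := (Nat.isCoprime_iff_coprime.2 h).map (Int.castRingHom O)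
  exact Ideal.isCoprime_iff_exists.2
    ⟨_, I.mul_mem_left a (by simpa using natCast_card_quotient_mem I),
      _, J.mul_mem_left b (by simpa using natCast_card_quotient_mem J), hab⟩

theorem missedPrimes_subset_singleton (T : Set O) (x : O) : missedPrimes T ⊆ missedPrimes {x} := by
  rintro ℓ ⟨q, hq, -⟩
  refine ⟨q, hq, x - 1, fun n hn hmem ↦ ℓ.2.ne_one ?_⟩
  rw [Set.mem_singleton_iff.1 hn, sub_sub_cancel, ← Ideal.eq_top_iff_one] at hmem
  rw [← hq, hmem, Nat.card_unique]

namespace IsDensity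

variable [Infinite O]

theorem le_exp_neg_sum_missedPrimes (hδ : IsDensity δ) (hT : T.Nonempty)
    (F : Finset (missedPrimes T)) : δ T ≤ Real.exp (-∑ ℓ ∈ F, ((ℓ.1 : ℕ) : ℝ)⁻¹) := by
  choose q hq r hr using fun ℓ : missedPrimes T ↦ ℓ.2
  have (ℓ : F) : Finite (O ⧸ q ℓ) := Nat.finite_of_card_ne_zero (hq ℓ ▸ ℓ.1.1.2.ne_zero)
  have pairwise_isCoprime : Pairwise (Function.onFun IsCoprime fun ℓ : F ↦ q ℓ) := by
    intro ℓ ℓ' hne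
    apply isCoprime_of_coprime_card_quotient
    rw [hq, hq, Nat.coprime_primes ℓ.1.1.2 ℓ'.1.1.2]
    exact fun h ↦ hne (Subtype.ext (Subtype.ext (Subtype.ext h)))
  calc δ T ≤ ∏ ℓ : F, (1 - (Nat.card (O ⧸ q ℓ) : ℝ)⁻¹) :=
        hδ.le_prod_of_pairwise_isCoprime hT pairwise_isCoprime fun ℓ ↦ hr ℓ
    _ = ∏ ℓ ∈ F, (1 - ((ℓ.1 : ℕ) : ℝ)⁻¹) := by
        simp only [hq]
        exact Finset.prod_coe_sort F fun ℓ ↦ 1 - ((ℓ.1 : ℕ) : ℝ)⁻¹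
    _ ≤ ∏ ℓ ∈ F, Real.exp (-((ℓ.1 : ℕ) : ℝ)⁻¹) :=
        Finset.prod_le_prod (fun ℓ _ ↦ sub_nonneg.2 (Nat.cast_inv_le_one _))
          fun ℓ _ ↦ Real.one_sub_le_exp_neg _
    _ = _ := by rw [← Real.exp_sum, Finset.sum_neg_distrib]

theorem eq_zero_of_nonempty_of_tsum_missedPrimes (hδ : IsDensity δ) (hT : T.Nonempty)
    (h : ∑' ℓ : missedPrimes T, ((ℓ.1 : ℕ) : ℝ≥0∞)⁻¹ = ⊤) : δ T = 0 := by
  by_contra hne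
  have hpos : 0 < δ T := (hδ.nonneg T).lt_of_ne' hne
  have sum_le (F : Finset (missedPrimes T)) :
      ∑ ℓ ∈ F, ((ℓ.1 : ℕ) : ℝ≥0∞)⁻¹ ≤ ENNReal.ofReal (-Real.log (δ T)) := by
    have : ∑ ℓ ∈ F, ((ℓ.1 : ℕ) : ℝ)⁻¹ ≤ -Real.log (δ T) := by
      rw [le_neg, Real.log_le_iff_le_exp hpos]
      exact hδ.le_exp_neg_sum_missedPrimes hT F
    refine le_of_eq_of_le ?_ (ENNReal.ofReal_le_ofReal this)
    rw [ENNReal.ofReal_sum_of_nonneg fun _ _ ↦ by positivity]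
    refine Finset.sum_congr rfl fun ℓ _ ↦ ?_
    rw [ENNReal.ofReal_inv_of_pos (mod_cast ℓ.1.2.pos), ENNReal.ofReal_natCast]
  exact (ENNReal.summable.tsum_le_of_sum_le sum_le).not_gt (h ▸ ENNReal.ofReal_lt_top)

theorem singleton_eq_zero (hδ : IsDensity δ)
    (h : ∑' ℓ : missedPrimes T, ((ℓ.1 : ℕ) : ℝ≥0∞)⁻¹ = ⊤) (x : O) : δ {x} = 0 :=
  hδ.eq_zero_of_nonempty_of_tsum_missedPrimes (Set.singleton_nonempty x) <| top_le_iff.1 <|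
    h.ge.trans <| ENNReal.tsum_mono_subtype (fun ℓ : Nat.Primes ↦ ((ℓ : ℕ) : ℝ≥0∞)⁻¹)
      (missedPrimes_subset_singleton T x)

theorem eq_zero_of_tsum_missedPrimes (hδ : IsDensity δ)
    (h : ∑' ℓ : missedPrimes T, ((ℓ.1 : ℕ) : ℝ≥0∞)⁻¹ = ⊤) : δ T = 0 := by
  obtain rfl | hT := T.eq_empty_or_nonempty
  · exact le_antisymm ((hδ.mono _ _ (Set.empty_subset {0})).trans_eq (hδ.singleton_eq_zero h 0))
      (hδ.nonneg _)
  · exact hδ.eq_zero_of_nonempty_of_tsum_missedPrimes hT h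

end IsDensity

end Density

section Divergence

open scoped ENNReal

theorem surjective_of_prime_card {R k : Type*} [Ring R] [Ring k] [Nontrivial k] (ψ : R →+* k)
    (hk : (Nat.card k).Prime) : Function.Surjective ψ := by
  have : Fact (Nat.card k).Prime := ⟨hk⟩
  refine AddMonoidHom.range_eq_top.1
    ((AddSubgroup.eq_bot_or_eq_top_of_prime_card ψ.toAddMonoidHom.range).resolve_left fun h ↦ ?_)
  exact one_ne_zero (AddSubgroup.mem_bot.1 (h ▸ ⟨1, map_one ψ⟩ : (1 : k) ∈ (⊥ : AddSubgroup k)))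

theorem exists_map_eq_of_notMem_missedPrimes {O k : Type*} [CommRing O] [CommRing k] [Nontrivial k]
    (ψ : O →+* k) {T : Set O} {ℓ : Nat.Primes} (hk : Nat.card k = ℓ) (hℓ : ℓ ∉ missedPrimes T)
    (x : k) : ∃ n ∈ T, ψ n = x := by
  have hψ := surjective_of_prime_card ψ (hk ▸ ℓ.2)
  obtain ⟨r, rfl⟩ := hψ x
  by_contra! hne
  refine hℓ ⟨RingHom.ker ψ, ?_, r, fun n hn hmem ↦ hne n hn ?_⟩
  · rw [Nat.card_congr (RingHom.quotientKerEquivOfSurjective hψ).toEquiv, hk]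
  · rwa [RingHom.mem_ker, map_sub, sub_eq_zero] at hmem

variable {K : Type*} [Field K] [NumberField K] {S : Finset (HeightOneSpectrum (𝓞 K))}

theorem exists_sInt_ringHom_comp_eq {v : HeightOneSpectrum (𝓞 K)} (hv : v ∉ S) {k : Type*}
    [Field k] {φ : 𝓞 K →+* k} (hφ : RingHom.ker φ ≤ v.asIdeal) :
    ∃ ψ : SInt K S →+* k, ψ.comp (algebraMap (𝓞 K) (SInt K S)) = φ := by
  have isUnit_map (y : v.asIdeal.primeCompl) : IsUnit (φ y) :=
    isUnit_iff_ne_zero.2 fun h ↦ y.2 (hφ h)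
  have mem (x : SInt K S) : algebraMap (SInt K S) K x ∈ v.valuationSubringAtPrime K := by
    rw [v.valuationSubringAtPrime_eq_valuationSubring]
    exact x.2 v hv
  let i : SInt K S →+* v.valuationSubringAtPrime K :=
    (algebraMap (SInt K S) K).codRestrict (v.valuationSubringAtPrime K).toSubring mem
  have i_algebraMap (y : 𝓞 K) : i (algebraMap (𝓞 K) (SInt K S) y) =
      algebraMap (𝓞 K) (v.valuationSubringAtPrime K) y := Subtype.ext rfl
  let lift : v.valuationSubringAtPrime K →+* k :=
    IsLocalization.lift (M := v.asIdeal.primeCompl) isUnit_map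
  have lift_algebraMap (y : 𝓞 K) : lift (algebraMap (𝓞 K) (v.valuationSubringAtPrime K) y) = φ y :=
    IsLocalization.lift_eq isUnit_map y
  refine ⟨lift.comp i, RingHom.ext fun y ↦ ?_⟩
  rw [RingHom.comp_apply, RingHom.comp_apply, i_algebraMap, lift_algebraMap]

variable {L : Type*} [Field L] [NumberField L] [Algebra K L] {f G : (𝓞 K)[X]} {θ : 𝓞 L}
  {T : Set (SInt K S)}

theorem exists_aeval_sub_sq_mem (hf : aeval θ f = 0)
    (hT : ∀ n ∈ T, ∃ u v : SInt K S, aeval n G = u ^ 2 - aeval n f * v ^ 2)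
    {P : HeightOneSpectrum (𝓞 L)} (hS : P.under (𝓞 K) ∉ S) (hP : (Ideal.absNorm P.asIdeal).Prime)
    (hmissed : residueChar P ∉ missedPrimes T) : ∃ s : 𝓞 L, aeval θ G - s ^ 2 ∈ P.asIdeal := by
  let _ := Ideal.Quotient.field P.asIdeal
  let mk := Ideal.Quotient.mk P.asIdeal
  obtain ⟨ψ, hψ⟩ := exists_sInt_ringHom_comp_eq hS (φ := mk.comp (algebraMap (𝓞 K) (𝓞 L)))
    fun y hy ↦ Ideal.mem_comap.2 (Ideal.Quotient.eq_zero_iff_mem.1 hy)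
  have card_eq : Nat.card (𝓞 L ⧸ P.asIdeal) = residueChar P := by
    obtain ⟨j, -, hnorm⟩ := exists_absNorm_eq_residueChar_pow P
    have j_eq_one : j = 1 := Nat.Prime.eq_one_of_pow (hnorm ▸ hP)
    rw [← pow_one (residueChar P : ℕ), ← j_eq_one, ← hnorm, Ideal.absNorm_apply,
      Submodule.cardQuot_apply]
  obtain ⟨n, hn, hnθ⟩ := exists_map_eq_of_notMem_missedPrimes ψ card_eq hmissed (mk θ)
  have map_aeval (p : (𝓞 K)[X]) : ψ (aeval n p) = mk (aeval θ p) := by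
    rw [aeval_def, aeval_def, hom_eval₂, hom_eval₂, hψ, hnθ]
  obtain ⟨u, v, huv⟩ := hT n hn
  obtain ⟨s, hs : mk s = ψ u⟩ := Ideal.Quotient.mk_surjective (ψ u)
  refine ⟨s, Ideal.Quotient.eq.1 ?_⟩
  calc mk (aeval θ G) = ψ (u ^ 2 - aeval n f * v ^ 2) := by rw [← huv, map_aeval]
    _ = mk (s ^ 2) := by rw [map_sub, map_mul, map_aeval, hf, map_zero, zero_mul, sub_zero,
        map_pow, map_pow, hs]

theorem tsum_missedPrimes_eq_top_of_not_isSquare (hf : aeval θ f = 0)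
    (hG : ¬ IsSquare ((aeval θ G : 𝓞 L) : L))
    (hT : ∀ n ∈ T, ∃ u v : SInt K S, aeval n G = u ^ 2 - aeval n f * v ^ 2) :
    ∑' ℓ : missedPrimes T, ((ℓ.1 : ℕ) : ℝ≥0∞)⁻¹ = ⊤ := by
  by_contra hne
  let I : Ideal (𝓞 L) := (∏ v ∈ S, v.asIdeal).map (algebraMap (𝓞 K) (𝓞 L))
  let J : Ideal (𝓞 L) := Ideal.span {2 * aeval θ G}
  have aeval_ne_zero : aeval θ G ≠ 0 := fun h ↦ hG (h ▸ ⟨0, by simp⟩)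
  have hI : I ≠ ⊥ := by
    rw [Ne, Ideal.map_eq_bot_iff_of_injective (FaithfulSMul.algebraMap_injective _ _),
      ← Ideal.zero_eq_bot, Finset.prod_eq_zero_iff]
    exact fun ⟨v, _, hv⟩ ↦ v.ne_bot hv
  have hJ : J ≠ ⊥ := by simp [J, aeval_ne_zero]
  have summable := ((invNormSummable_setOf_le hI).union (invNormSummable_setOf_le hJ)).union
    (invNormSummable_setOf_not_prime.union (invNormSummable_setOf_residueChar_mem hne))
  refine hG (isSquare_of_forall_isSquare_mod summable fun P hP ↦ ?_)
  simp only [Set.mem_union, Set.mem_ofPred_eq, not_or, not_not] at hP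
  obtain ⟨⟨hPI, hPJ⟩, hprime, hmissed⟩ := hP
  refine ⟨fun h ↦ hPJ ((Ideal.span_singleton_le_iff_mem _).2 h),
    exists_aeval_sub_sq_mem hf hT (fun hS ↦ hPI ?_) hprime hmissed⟩
  exact Ideal.map_le_iff_le_comap.2 (Ideal.prod_le_inf.trans (Finset.inf_le hS))

theorem exists_map_eq_C_sq_mul (G : (SInt K S)[X]) : ∃ b : 𝓞 K, b ≠ 0 ∧ ∃ G' : (𝓞 K)[X],
    G'.map (algebraMap (𝓞 K) (SInt K S)) = C (algebraMap (𝓞 K) (SInt K S) b) ^ 2 * G := by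
  let p := G.map (algebraMap (SInt K S) K)
  obtain ⟨b, hb, h⟩ := IsLocalization.integerNormalization_spec (𝓞 K)⁰ p
  refine ⟨b, nonZeroDivisors.ne_zero hb, C b * IsLocalization.integerNormalization (𝓞 K)⁰ p, ?_⟩
  apply map_injective _ (FaithfulSMul.algebraMap_injective (SInt K S) K)
  rw [map_map, ← IsScalarTower.algebraMap_eq, Polynomial.map_mul, map_C, h,
    algebra_compatible_smul K b p, smul_eq_C_mul, ← mul_assoc, ← sq, Polynomial.map_mul,
    Polynomial.map_pow, map_C, ← IsScalarTower.algebraMap_apply]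

theorem tsum_missedPrimes_eq_top {f : (𝓞 K)[X]} (hf : f.Monic) {G : (SInt K S)[X]} {q : K[X]}
    (hq : Irreducible q) (hqf : q ∣ f.map (algebraMap (𝓞 K) K))
    (hG : ¬ ∃ p, q ∣ G.map (algebraMap (SInt K S) K) - p ^ 2)
    (hT : ∀ n ∈ T, ∃ u v : SInt K S, G.eval n = u ^ 2 - aeval n f * v ^ 2) :
    ∑' ℓ : missedPrimes T, ((ℓ.1 : ℕ) : ℝ≥0∞)⁻¹ = ⊤ := by
  have : Fact (Irreducible q) := ⟨hq⟩
  have : Module.Finite K (AdjoinRoot q) := (AdjoinRoot.powerBasis hq.ne_zero).finite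
  have : NumberField (AdjoinRoot q) := NumberField.of_module_finite K _
  have root_f : aeval (AdjoinRoot.root q) f = 0 := by
    rw [← aeval_map_algebraMap K, AdjoinRoot.aeval_eq, AdjoinRoot.mk_eq_zero]
    exact hqf
  let θ : 𝓞 (AdjoinRoot q) := ⟨AdjoinRoot.root q, isIntegral_trans _ ⟨f, hf, root_f⟩⟩
  have coe_aeval_θ (p : (𝓞 K)[X]) :
      ((aeval θ p : 𝓞 (AdjoinRoot q)) : AdjoinRoot q) = aeval (AdjoinRoot.root q) p :=
    (aeval_algebraMap_apply (AdjoinRoot q) θ p).symm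
  obtain ⟨b, hb, G', hG'⟩ := exists_map_eq_C_sq_mul G
  have b_ne_zero : algebraMap K (AdjoinRoot q) (algebraMap (𝓞 K) K b) ≠ 0 := by simpa using hb
  have aeval_G' : ((aeval θ G' : 𝓞 (AdjoinRoot q)) : AdjoinRoot q) =
      algebraMap K _ (algebraMap (𝓞 K) K b) ^ 2 *
        AdjoinRoot.mk q (G.map (algebraMap (SInt K S) K)) := by
    rw [coe_aeval_θ, ← aeval_map_algebraMap K, IsScalarTower.algebraMap_eq (𝓞 K) (SInt K S) K,
      ← map_map, hG', AdjoinRoot.aeval_eq]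
    simp [← IsScalarTower.algebraMap_apply]
  refine tsum_missedPrimes_eq_top_of_not_isSquare (f := f) (G := G') (θ := θ) ?_ ?_ ?_
  · exact RingOfIntegers.ext ((coe_aeval_θ f).trans root_f)
  · rintro ⟨r, hr⟩
    obtain ⟨p, hp⟩ := AdjoinRoot.mk_surjective
      (r / algebraMap K (AdjoinRoot q) (algebraMap (𝓞 K) K b))
    refine hG ⟨p, ?_⟩
    rw [← AdjoinRoot.mk_eq_zero, map_sub, map_pow, hp, div_pow, sq r, ← hr, aeval_G', sub_eq_zero]
    field_simp
  · intro n hn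
    obtain ⟨u, v, huv⟩ := hT n hn
    refine ⟨algebraMap _ _ b * u, algebraMap _ _ b * v, ?_⟩
    rw [← aeval_map_algebraMap (SInt K S), hG']
    simp [huv, coe_aeval_eq_eval]
    ring

end Divergence

section Squarefree

theorem dvd_of_sq_dvd_mul_sq {R : Type*} [CommRing R] [IsDomain R] [UniqueFactorizationMonoid R]
    {f t b : R} (hf : Squarefree f) (h : t ^ 2 ∣ f * b ^ 2) : t ∣ b := by
  obtain rfl | ht := eq_or_ne t 0
  · simpa [hf.ne_zero] using h
  obtain ⟨t', b', c, hcop, rfl, rfl⟩ := UniqueFactorizationMonoid.exists_reduced_factors t ht b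
  have sq_dvd : t' ^ 2 ∣ f * b' ^ 2 := by
    rw [← mul_dvd_mul_iff_left (pow_ne_zero 2 (left_ne_zero_of_mul ht))]
    convert h using 1 <;> ring
  have isUnit : IsUnit t' := hf t' (by rw [← sq]; exact (hcop.pow).dvd_of_dvd_mul_right sq_dvd)
  exact mul_dvd_mul_left c isUnit.dvd

theorem exists_dvd_sub_sq_of_forall_irreducible {R : Type*} [CommRing R] [IsDomain R]
    [IsPrincipalIdealRing R] {a f : R} (hf : Squarefree f)
    (h : ∀ q, Irreducible q → q ∣ f → ∃ p, q ∣ a - p ^ 2) : ∃ p, f ∣ a - p ^ 2 := by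
  induction f using UniqueFactorizationMonoid.induction_on_prime with
  | h₁ => exact absurd hf not_squarefree_zero
  | h₂ x hx => exact ⟨0, hx.dvd⟩
  | h₃ d q _ hq ih =>
    obtain ⟨p₁, hp₁⟩ := h q hq.irreducible (dvd_mul_right q d)
    obtain ⟨p₂, hp₂⟩ := ih hf.of_mul_right fun r hr hrd ↦ h r hr (hrd.mul_left q)
    have coprime : IsCoprime q d := hq.irreducible.coprime_iff_not_dvd.2 fun hqd ↦
      hq.not_isUnit (hf q (mul_dvd_mul_left q hqd))
    have dvd_sub_sq {m p r : R} (hr : m ∣ a - r ^ 2) (hpr : m ∣ p - r) : m ∣ a - p ^ 2 := by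
      convert dvd_sub hr (hpr.mul_left (p + r)) using 1
      ring
    obtain ⟨x, y, hxy⟩ := id coprime
    exact ⟨p₂ * (x * q) + p₁ * (y * d), coprime.mul_dvd
      (dvd_sub_sq hp₁ ⟨(p₂ - p₁) * x, by linear_combination p₁ * hxy⟩)
      (dvd_sub_sq hp₂ ⟨(p₁ - p₂) * y, by linear_combination p₂ * hxy⟩)⟩

theorem squarefree_map_of_monic {R K : Type*} [CommRing R] [IsDomain R] [IsIntegrallyClosed R]
    [Field K] [Algebra R K] [IsFractionRing R K] {f : R[X]} (hm : f.Monic) (hf : Squarefree f) :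
    Squarefree (f.map (algebraMap R K)) := by
  intro x hx
  obtain ⟨g, hg⟩ := IsIntegrallyClosed.eq_map_mul_C_of_dvd K hm (dvd_of_mul_right_dvd hx)
  have x_ne_zero : x ≠ 0 := by
    rintro rfl
    exact (hm.map (algebraMap R K)).ne_zero (by simpa using hx)
  have map_monic : (g.map (algebraMap R K)).Monic := by
    have := congrArg leadingCoeff hg
    rw [leadingCoeff_mul, leadingCoeff_C] at this
    exact mul_right_cancel₀ (leadingCoeff_ne_zero.2 x_ne_zero) (by rw [this, one_mul])
  have injective := IsFractionRing.injective R K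
  have monic : g.Monic := monic_of_injective injective map_monic
  have map_dvd : g.map (algebraMap R K) ∣ x := ⟨_, hg.symm⟩
  have mul_self_dvd : g * g ∣ f := by
    rw [← map_dvd_map _ injective (monic.mul monic), Polynomial.map_mul]
    exact (mul_dvd_mul map_dvd map_dvd).trans hx
  rw [← hg]
  exact ((hf g mul_self_dvd).map (mapRingHom (algebraMap R K))).mul
    (isUnit_C.2 (leadingCoeff_ne_zero.2 x_ne_zero).isUnit)

end Squarefree

section NormEquation

theorem eq_zero_of_sq_eq_mul_sq {R : Type*} [CommRing R] [IsDomain R] {f a b : R[X]}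
    (hf : Odd f.natDegree) (h : a ^ 2 = f * b ^ 2) : a = 0 ∧ b = 0 := by
  have f_ne_zero : f ≠ 0 := by
    rintro rfl
    simp at hf
  have b_eq_zero : b = 0 := by
    by_contra hb
    have := congrArg natDegree h
    rw [natDegree_pow, natDegree_mul f_ne_zero (pow_ne_zero 2 hb), natDegree_pow] at this
    grind
  exact ⟨by simpa [b_eq_zero] using h, b_eq_zero⟩

variable {K : Type*} [Field K] {A B f : K[X]}

theorem degree_mul_sq_lt {q r : K[X]} {d N : ℕ} (hr : r.degree < d)
    (hd : q.natDegree + 2 * d ≤ N + 1) : (q * r ^ 2).degree < N := by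
  obtain hqr | hqr := eq_or_ne (q * r ^ 2) 0
  · rw [hqr, degree_zero]
    exact WithBot.bot_lt_coe N
  have r_ne_zero : r ≠ 0 := by
    rintro rfl
    simp at hqr
  rw [degree_eq_natDegree r_ne_zero, Nat.cast_lt] at hr
  rw [degree_eq_natDegree hqr, Nat.cast_lt, natDegree_mul (left_ne_zero_of_mul hqr)
    (right_ne_zero_of_mul hqr), natDegree_pow]
  omega

theorem exists_degree_lt_dvd_sub_mul (hA : A ≠ 0) (hf : f ≠ 0) (B p : K[X]) {dU dV dW : ℕ}
    (h : A.natDegree + f.natDegree < dU + dV + dW) :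
    ∃ u v w : K[X], u.degree < dU ∧ v.degree < dV ∧ w.degree < dW ∧
      ¬ (u = 0 ∧ v = 0 ∧ w = 0) ∧ A ∣ u - B * v ∧ f ∣ u - p * w := by
  let Φ : (degreeLT K dU × degreeLT K dV × degreeLT K dW) →ₗ[K] (AdjoinRoot A × AdjoinRoot f) :=
    { toFun x := (AdjoinRoot.mk A (x.1.1 - B * x.2.1.1), AdjoinRoot.mk f (x.1.1 - p * x.2.2.1))
      map_add' x y := by ext <;> simp <;> ring
      map_smul' c x := by
        simp only [Prod.smul_fst, Prod.smul_snd, Submodule.coe_smul, RingHom.id_apply, Prod.smul_mk,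
          AdjoinRoot.smul_mk, smul_sub, mul_smul_comm] }
  have := (AdjoinRoot.powerBasis hA).finite
  have := (AdjoinRoot.powerBasis hf).finite
  have (d : ℕ) : Module.Finite K (degreeLT K d) := .equiv (degreeLTEquiv K d).symm
  have finrank_degreeLT (d : ℕ) : Module.finrank K (degreeLT K d) = d := by
    rw [LinearEquiv.finrank_eq (degreeLTEquiv K d), Module.finrank_fin_fun]
  have ker_ne_bot : LinearMap.ker Φ ≠ ⊥ := by
    apply LinearMap.ker_ne_bot_of_finrank_lt
    rw [Module.finrank_prod, Module.finrank_prod, Module.finrank_prod, finrank_degreeLT,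
      finrank_degreeLT, finrank_degreeLT, (AdjoinRoot.powerBasis hA).finrank,
      (AdjoinRoot.powerBasis hf).finrank, AdjoinRoot.powerBasis_dim, AdjoinRoot.powerBasis_dim]
    rwa [← add_assoc]
  obtain ⟨⟨⟨u, hu⟩, ⟨v, hv⟩, ⟨w, hw⟩⟩, hΦ, hne⟩ := (Submodule.ne_bot_iff _).1 ker_ne_bot
  rw [LinearMap.mem_ker] at hΦ
  refine ⟨u, v, w, mem_degreeLT.1 hu, mem_degreeLT.1 hv, mem_degreeLT.1 hw, ?_,
    AdjoinRoot.mk_eq_zero.1 (congrArg Prod.fst hΦ), AdjoinRoot.mk_eq_zero.1 (congrArg Prod.snd hΦ)⟩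
  rintro ⟨rfl, rfl, rfl⟩
  exact hne rfl

theorem ne_zero_of_isCoprime_of_odd_natDegree (hodd : Odd f.natDegree) (hcop : IsCoprime A f) :
    A ≠ 0 := by
  rintro rfl
  simp [natDegree_eq_zero_of_isUnit (isCoprime_zero_left.1 hcop)] at hodd

theorem exists_sq_sub_mul_sq_eq (hodd : Odd f.natDegree) (hcop : IsCoprime A f)
    (hB : A ∣ B ^ 2 - f) {ε : K} (hε : ε ≠ 0) {p : K[X]} (hp : f ∣ C ε * A - p ^ 2) :
    ∃ u v w : K[X], w ≠ 0 ∧ u ^ 2 - f * v ^ 2 = C ε * A * w ^ 2 := by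
  have f_ne_zero : f ≠ 0 := by
    rintro rfl
    simp at hodd
  have hA := ne_zero_of_isCoprime_of_odd_natDegree hodd hcop
  obtain ⟨u, v, w, hu, hv, hw, hne, hAuv, hfuw⟩ := exists_degree_lt_dvd_sub_mul hA f_ne_zero B p
    (dU := (f.natDegree + A.natDegree + 1) / 2) (dV := (A.natDegree + 1) / 2)
    (dW := (f.natDegree + 1) / 2) (by grind)
  have A_dvd : A ∣ u ^ 2 - f * v ^ 2 - C ε * A * w ^ 2 := by
    convert dvd_sub (dvd_add (hAuv.mul_right (u + B * v)) (hB.mul_right (v ^ 2)))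
      (dvd_mul_right A (C ε * w ^ 2)) using 1
    ring
  have f_dvd : f ∣ u ^ 2 - f * v ^ 2 - C ε * A * w ^ 2 := by
    convert dvd_sub (dvd_sub (hfuw.mul_right (u + p * w)) (hp.mul_right (w ^ 2)))
      (dvd_mul_right f (v ^ 2)) using 1
    ring
  have degree_lt : (u ^ 2 - f * v ^ 2 - C ε * A * w ^ 2).degree < (A * f).degree := by
    rw [degree_eq_natDegree (mul_ne_zero hA f_ne_zero), natDegree_mul hA f_ne_zero]
    refine (degree_sub_le _ _).trans_lt (max_lt ((degree_sub_le _ _).trans_lt (max_lt ?_ ?_)) ?_)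
    · simpa using degree_mul_sq_lt (q := 1) (N := A.natDegree + f.natDegree) hu
        (by rw [natDegree_one]; omega)
    · exact degree_mul_sq_lt hv (by omega)
    · exact degree_mul_sq_lt hw (by rw [natDegree_C_mul hε]; omega)
  have norm_eq := sub_eq_zero.1 (eq_zero_of_dvd_of_degree_lt (hcop.mul_dvd A_dvd f_dvd) degree_lt)
  refine ⟨u, v, w, ?_, norm_eq⟩
  rintro rfl
  obtain ⟨rfl, rfl⟩ := eq_zero_of_sq_eq_mul_sq hodd (a := u) (b := v)
    (by linear_combination norm_eq)
  exact hne ⟨rfl, rfl, rfl⟩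

end NormEquation

section QuadraticAlgebra

open QuadraticAlgebra

variable {R : Type*} [CommRing R] {f : R}

local notation "conj" => starRingEnd (QuadraticAlgebra R f 0)

theorem conj_algebraMap (r : R) : conj (algebraMap R _ r) = algebraMap R _ r := by
  ext <;> simp [starRingEnd_apply]

theorem span_pair_mul_map_conj {A B C : R} (hf : B ^ 2 - A * C = f) (h : IsCoprime A (2 * B)) :
    Ideal.span {algebraMap R _ A, ω - algebraMap R _ B} *
      (Ideal.span {algebraMap R _ A, ω - algebraMap R _ B}).map conj =
        Ideal.span {algebraMap R _ A} := by
  have conj_sub : conj (ω - algebraMap R _ B) = -ω - algebraMap R _ B := by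
    ext <;> simp [starRingEnd_apply]
  have omega_sq : ω * ω = algebraMap R (QuadraticAlgebra R f 0) (B ^ 2 - A * C) := by
    rw [hf, omega_mul_omega_eq_mk]; rfl
  rw [Ideal.map_span, Set.image_pair, conj_algebraMap, conj_sub, Ideal.span_pair_mul_span_pair]
  apply le_antisymm
  · rw [Ideal.span_le]
    rintro z (rfl | rfl | rfl | rfl) <;> rw [SetLike.mem_coe, Ideal.mem_span_singleton]
    · exact dvd_mul_right _ _
    · exact dvd_mul_right _ _
    · exact dvd_mul_left _ _
    · refine ⟨algebraMap R _ C, ?_⟩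
      rw [map_sub, map_mul, map_pow] at omega_sq
      linear_combination -omega_sq
  · obtain ⟨x, y, hxy⟩ := h
    have A_eq : algebraMap R (QuadraticAlgebra R f 0) A =
        algebraMap R _ x * (algebraMap R _ A * algebraMap R _ A) +
          -algebraMap R _ y * (algebraMap R _ A * (-ω - algebraMap R _ B)) +
          -algebraMap R _ y * ((ω - algebraMap R _ B) * algebraMap R _ A) := by
      have := congrArg (algebraMap R (QuadraticAlgebra R f 0)) hxy
      simp only [map_add, map_mul, map_one, map_ofNat] at this
      linear_combination (-algebraMap R _ A) * this
    rw [Ideal.span_singleton_le_iff_mem]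
    refine Eq.subst (motive := (· ∈ _)) A_eq.symm (Ideal.add_mem _ (Ideal.add_mem _ ?_ ?_) ?_) <;>
      exact Ideal.mul_mem_left _ _ (Ideal.subset_span (by simp))

theorem span_mul_mul_sup_eq {Q : Type*} [CommRing Q] {I J : Ideal Q} {α β z z' : Q}
    (hIJ : I * J = Ideal.span {β})
    (h : Ideal.span {z'} * Ideal.span {z} * Ideal.span {β} = Ideal.span {α} ^ 2) :
    Ideal.span {z'} * I * (Ideal.span {α} ⊔ Ideal.span {z} * J) =
      Ideal.span {α} * (Ideal.span {α} ⊔ Ideal.span {z'} * I) := by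
  simp only [← Ideal.add_eq_sup]
  calc Ideal.span {z'} * I * (Ideal.span {α} + Ideal.span {z} * J)
    _ = Ideal.span {α} * (Ideal.span {z'} * I) + Ideal.span {z'} * Ideal.span {z} * (I * J) := by
        ring
    _ = Ideal.span {α} * (Ideal.span {α} + Ideal.span {z'} * I) := by rw [hIJ, h]; ring

variable [IsDomain R]

theorem isDomain_quadraticAlgebra {a b : R}
    (hN : ∀ z : QuadraticAlgebra R a b, z.norm = 0 → z = 0) :
    IsDomain (QuadraticAlgebra R a b) := by
  have : Nontrivial (QuadraticAlgebra R a b) := (algebraMap_injective (a := a) (b := b)).nontrivial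
  have : NoZeroDivisors (QuadraticAlgebra R a b) := ⟨fun {x y} hxy ↦ by
    have norm_mul_eq : x.norm * y.norm = 0 := by rw [← map_mul, hxy, QuadraticAlgebra.norm_zero]
    exact (mul_eq_zero.1 norm_mul_eq).imp (hN x) (hN y)⟩
  exact NoZeroDivisors.to_isDomain _

theorem exists_mul_map_conj_eq_span [IsPrincipalIdealRing R] (h2 : IsUnit (2 : R))
    (hf : Squarefree f) (hN : ∀ z : QuadraticAlgebra R f 0, z.norm = 0 → z = 0)
    {I : Ideal (QuadraticAlgebra R f 0)} (hI : I ≠ ⊥) :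
    ∃ t : R, t ≠ 0 ∧ I * I.map conj = Ideal.span {algebraMap R _ t} := by
  let D := I * I.map conj
  have mul_conj_mem {x y} (hx : x ∈ I) (hy : y ∈ I) : x * conj y ∈ D :=
    Ideal.mul_mem_mul hx (Ideal.mem_map_of_mem _ hy)
  obtain ⟨t, ht⟩ := (IsPrincipalIdealRing.principal (D.comap (algebraMap R _))).principal
  have t_dvd_iff {c : R} : t ∣ c ↔ algebraMap R _ c ∈ D := by
    rw [← Ideal.mem_span_singleton, ← Ideal.mem_comap, ht]
  have t_dvd_norm {x} (hx : x ∈ I) : t ∣ x.norm := by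
    rw [t_dvd_iff, algebraMap_norm_eq_mul_star]
    exact mul_conj_mem hx hx
  refine ⟨t, ?_, le_antisymm (Ideal.mul_le.2 fun x hx y' hy' ↦ ?_)
    ((Ideal.span_singleton_le_iff_mem _).2 (t_dvd_iff.1 dvd_rfl))⟩
  · obtain ⟨x, hx, x_ne_zero⟩ := (Submodule.ne_bot_iff _).1 hI
    rintro rfl
    exact x_ne_zero (hN x (zero_dvd_iff.1 (t_dvd_norm hx)))
  · obtain ⟨y, hy, rfl⟩ := (Ideal.mem_map_iff_of_surjective conj star_involutive.surjective).1 hy'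
    have t_dvd_re : t ∣ (x * conj y).re := by
      rw [← h2.dvd_mul_left, t_dvd_iff]
      convert D.add_mem (mul_conj_mem hx hy) (mul_conj_mem hy hx) using 1
      ext <;> simp [starRingEnd_apply] <;> ring
    have t_dvd_im : t ∣ (x * conj y).im := by
      refine dvd_of_sq_dvd_mul_sq hf ?_
      have norm_eq : f * (x * conj y).im ^ 2 = (x * conj y).re ^ 2 - x.norm * y.norm := by
        rw [← norm_star y, ← map_mul, norm_def, starRingEnd_apply]
        ring
      rw [norm_eq, sq t]
      exact dvd_sub (sq t ▸ pow_dvd_pow_of_dvd t_dvd_re 2)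
        (mul_dvd_mul (t_dvd_norm hx) (t_dvd_norm hy))
    exact Ideal.mem_span_singleton.2 (algebraMap_dvd_iff.2 ⟨t_dvd_re, t_dvd_im⟩)

theorem exists_span_mul_eq_span_mul_sq [IsPrincipalIdealRing R] (h2 : IsUnit (2 : R))
    (hf : Squarefree f) (hN : ∀ z : QuadraticAlgebra R f 0, z.norm = 0 → z = 0)
    {I : Ideal (QuadraticAlgebra R f 0)} {a w ε : R} (ha : a ≠ 0) (hw : w ≠ 0) (hε : IsUnit ε)
    (hI : I * I.map conj = Ideal.span {algebraMap R _ a}) {z : QuadraticAlgebra R f 0}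
    (hz : z.norm = ε * a * w ^ 2) :
    ∃ x y t : QuadraticAlgebra R f 0, x ≠ 0 ∧ y ≠ 0 ∧ t ≠ 0 ∧
      ∃ c d : Ideal (QuadraticAlgebra R f 0), c * d = Ideal.span {t} ∧
        Ideal.span {x} * I = Ideal.span {y} * c ^ 2 := by
  let α := algebraMap R (QuadraticAlgebra R f 0) (a * w)
  have := isDomain_quadraticAlgebra hN
  have α_ne_zero : α ≠ 0 := (map_ne_zero_iff _ algebraMap_injective).2 (mul_ne_zero ha hw)
  have conj_z_ne_zero : conj z ≠ 0 := by
    intro h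
    rw [star_eq_zero.1 h, QuadraticAlgebra.norm_zero] at hz
    exact mul_ne_zero (mul_ne_zero hε.ne_zero ha) (pow_ne_zero 2 hw) hz.symm
  let c := Ideal.span {α} ⊔ Ideal.span {conj z} * I
  have c_ne_bot : c ≠ ⊥ := by simp [c, sup_eq_bot_iff, α_ne_zero]
  have map_conj_c : c.map conj = Ideal.span {α} ⊔ Ideal.span {z} * I.map conj := by
    rw [Ideal.map_sup, Ideal.map_mul, Ideal.map_span, Ideal.map_span, Set.image_singleton,
      Set.image_singleton, starRingEnd_self_apply]
    simp only [α, conj_algebraMap]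
  have norm_span : Ideal.span {conj z} * Ideal.span {z} * Ideal.span {algebraMap R _ a} =
      Ideal.span {α} ^ 2 := by
    have generator_eq : conj z * z * algebraMap R _ a = algebraMap R _ ε * α ^ 2 := by
      rw [mul_comm (conj z), starRingEnd_apply, ← algebraMap_norm_eq_mul_star, hz]
      simp only [α, ← map_mul, ← map_pow]
      ring_nf
    rw [Ideal.span_singleton_mul_span_singleton, Ideal.span_singleton_mul_span_singleton,
      Ideal.span_singleton_pow, generator_eq, Ideal.span_singleton_mul_left_unit (hε.map _)]
  obtain ⟨t, ht, hct⟩ := exists_mul_map_conj_eq_span h2 hf hN c_ne_bot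
  have map_t_ne_zero : algebraMap R (QuadraticAlgebra R f 0) t ≠ 0 :=
    (map_ne_zero_iff _ algebraMap_injective).2 ht
  refine ⟨conj z * algebraMap R _ t, α, algebraMap R _ t, mul_ne_zero conj_z_ne_zero map_t_ne_zero,
    α_ne_zero, map_t_ne_zero, c, c.map conj, hct, ?_⟩
  calc Ideal.span {conj z * algebraMap R _ t} * I
    _ = Ideal.span {conj z} * I * c.map conj * c := by
        rw [← Ideal.span_singleton_mul_span_singleton, ← hct]; ring
    _ = Ideal.span {α} * c ^ 2 := by
        rw [map_conj_c, span_mul_mul_sup_eq hI norm_span]; ring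

end QuadraticAlgebra

section SquareClass

/-- The class of the ideal `I` is a square in the class group: `I = g J²` for some invertible
fractional ideal `J` and some `g ≠ 0` in the fraction field. -/
def IsSquareClass {R : Type*} [CommRing R] (I : Ideal R) : Prop :=
  ∃ J : FractionalIdeal R⁰ (FractionRing R), IsUnit J ∧
    ∃ g : FractionRing R, g ≠ 0 ∧
      (I : FractionalIdeal R⁰ (FractionRing R)) = spanSingleton R⁰ g * J ^ 2

theorem isSquareClass_of_span_mul_eq {R : Type*} [CommRing R] [IsDomain R] {I c d : Ideal R}
    {x y t : R} (hx : x ≠ 0) (hy : y ≠ 0) (ht : t ≠ 0) (hcd : c * d = Ideal.span {t})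
    (hI : Ideal.span {x} * I = Ideal.span {y} * c ^ 2) : IsSquareClass I := by
  let φ := algebraMap R (FractionRing R)
  have map_ne_zero {r : R} (hr : r ≠ 0) : φ r ≠ 0 :=
    (map_ne_zero_iff φ (IsFractionRing.injective R (FractionRing R))).2 hr
  refine ⟨c, .of_mul_eq_one (d * spanSingleton R⁰ (φ t)⁻¹) ?_,
    (φ x)⁻¹ * φ y, mul_ne_zero (inv_ne_zero (map_ne_zero hx)) (map_ne_zero hy), ?_⟩
  · rw [← mul_assoc, ← coeIdeal_mul, hcd, coeIdeal_span_singleton, spanSingleton_mul_spanSingleton,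
      mul_inv_cancel₀ (map_ne_zero ht), spanSingleton_one]
  · have hI' : spanSingleton R⁰ (φ x) * (I : FractionalIdeal R⁰ (FractionRing R)) =
        spanSingleton R⁰ (φ y) * (c : FractionalIdeal R⁰ (FractionRing R)) ^ 2 := by
      simpa only [coeIdeal_mul, coeIdeal_span_singleton, coeIdeal_pow] using
        congrArg (fun Q : Ideal R ↦ (Q : FractionalIdeal R⁰ (FractionRing R))) hI
    rw [← spanSingleton_mul_spanSingleton, mul_assoc, ← hI', ← mul_assoc,
      spanSingleton_mul_spanSingleton, inv_mul_cancel₀ (map_ne_zero hx), spanSingleton_one, one_mul]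

/-- Adjoining a square root of `f`, presented by the coordinates with respect to the basis
`1, √f`. -/
noncomputable def adjoinRootEquivQuadraticAlgebra {R : Type*} [CommRing R] (f : R) :
    AdjoinRoot ((X : R[X]) ^ 2 - C f) ≃ₐ[R] QuadraticAlgebra R f 0 :=
  .ofAlgHom (AdjoinRoot.liftAlgHom _ (Algebra.ofId R _) QuadraticAlgebra.omega (by
      ext <;> simp [sq]))
    (QuadraticAlgebra.lift ⟨AdjoinRoot.root _, by
      rw [← sq, zero_smul, add_zero, Algebra.smul_def, mul_one, ← sub_eq_zero]
      have := AdjoinRoot.eval₂_root ((X : R[X]) ^ 2 - C f)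
      rwa [eval₂_sub, eval₂_X_pow, eval₂_C] at this⟩)
    (by ext <;> simp)
    (by ext; simp)

variable {K : Type*} [Field K] {f A B : K[X]}

/-- The coordinate ring `K[X][Y] ⧸ ⟨Y² - f⟩` as a quadratic algebra over `K[X]`. -/
noncomputable def HypRing.equivQuadraticAlgebra (K : Type*) [Field K] (f : K[X]) :
    HypRing K f ≃+* QuadraticAlgebra K[X] f 0 :=
  (adjoinRootEquivQuadraticAlgebra f).toRingEquiv

theorem map_equivQuadraticAlgebra_hypIdeal :
    (HypIdeal K f A B).map (HypRing.equivQuadraticAlgebra K f) =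
      Ideal.span {algebraMap K[X] _ A, QuadraticAlgebra.omega - algebraMap K[X] _ B} := by
  rw [HypIdeal, Ideal.map_span, Set.image_pair]
  have equiv_mk (r : K[X][X]) : HypRing.equivQuadraticAlgebra K f (HypRing.mk K f r) =
      r.eval₂ (algebraMap K[X] _) QuadraticAlgebra.omega := rfl
  simp [equiv_mk]

theorem eq_zero_of_norm_eq_zero (hf : Odd f.natDegree) (z : QuadraticAlgebra K[X] f 0)
    (hz : z.norm = 0) : z = 0 := by
  obtain ⟨hre, him⟩ := eq_zero_of_sq_eq_mul_sq (a := z.re) (b := z.im) hf (by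
    rw [QuadraticAlgebra.norm_def] at hz
    linear_combination hz)
  exact QuadraticAlgebra.ext hre him

theorem isSquareClass_hypIdeal [CharZero K] (hf : Squarefree f) (hodd : Odd f.natDegree)
    (hcop : IsCoprime A f) (hAB : A ∣ B ^ 2 - f) {ε : K} (hε : ε ≠ 0) {p : K[X]}
    (hp : f ∣ C ε * A - p ^ 2) : IsSquareClass (HypIdeal K f A B) := by
  obtain ⟨c, hc⟩ := hAB
  have h2 : IsUnit (2 : K[X]) := isUnit_C.2 (IsUnit.mk0 (2 : K) two_ne_zero)
  have hA2B : IsCoprime A (2 * B) := by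
    rw [isCoprime_mul_unit_left_right h2]
    have f_eq : f = B ^ 2 + A * -c := by linear_combination -hc
    rw [f_eq, IsCoprime.add_mul_left_right_iff] at hcop
    exact (IsCoprime.pow_right_iff two_pos).1 hcop
  obtain ⟨u, v, w, hw, huvw⟩ := exists_sq_sub_mul_sq_eq hodd hcop ⟨c, hc⟩ hε hp
  have hN := eq_zero_of_norm_eq_zero hodd
  obtain ⟨x, y, t, hx, hy, ht, c, d, hcd, hI⟩ :=
    exists_span_mul_eq_span_mul_sq h2 hf hN (ne_zero_of_isCoprime_of_odd_natDegree hodd hcop) hw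
      (isUnit_C.2 hε.isUnit) (span_pair_mul_map_conj (C := c) (by linear_combination hc) hA2B)
      (z := ⟨u, v⟩) (by rw [← huvw, QuadraticAlgebra.norm_def]; ring)
  let e := HypRing.equivQuadraticAlgebra K f
  have := isDomain_quadraticAlgebra hN
  have := e.toMulEquiv.isDomain
  have symm_ne_zero {z : QuadraticAlgebra K[X] f 0} (hz : z ≠ 0) : e.symm z ≠ 0 :=
    (map_ne_zero_iff e.symm e.symm.injective).2 hz
  refine isSquareClass_of_span_mul_eq (symm_ne_zero hx) (symm_ne_zero hy) (symm_ne_zero ht)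
    (c := c.map e.symm) (d := d.map e.symm) ?_ ?_
  · simpa [Ideal.map_mul, Ideal.map_span] using congrArg (Ideal.map e.symm) hcd
  · have map_hypIdeal : (HypIdeal K f A B).map e = _ := map_equivQuadraticAlgebra_hypIdeal
    rw [← map_hypIdeal] at hI
    simpa [Ideal.map_mul, Ideal.map_span, Ideal.map_pow,
      Ideal.comap_map_of_bijective e e.bijective]
      using congrArg (Ideal.map e.symm) hI

end SquareClass

section Specialization

open scoped ENNReal

/-- The specialized form `[A(n), 2B(n), C(n)]` is equivalent to the principal form `[1, 0, -f(n)]`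
under the twisted action of `GL₂(O)`. Division by `det M` is avoided by multiplying it across. -/
def IsTrivialSpecialization {O : Type*} [CommRing O] (f A B C : O[X]) (n : O) : Prop :=
  ∃ M : Matrix (Fin 2) (Fin 2) O, IsUnit M.det ∧ ∀ x y : O,
    M.det * (A.eval n * x ^ 2 + 2 * B.eval n * x * y + C.eval n * y ^ 2) =
      (M 0 0 * x + M 0 1 * y) ^ 2 - f.eval n * (M 1 0 * x + M 1 1 * y) ^ 2

/-- The `n` for which `e * A(n)` is a norm from `O[√f(n)]`. -/
def normValues {O : Type*} [CommRing O] (f A : O[X]) (e : O) : Set O :=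
  {n | ∃ u v, e * A.eval n = u ^ 2 - f.eval n * v ^ 2}

theorem IsTrivialSpecialization.exists_mem_normValues_out {O : Type*} [CommRing O]
    {f A B C : O[X]} {n : O} (h : IsTrivialSpecialization f A B C n) :
    ∃ e : Oˣ ⧸ (powMonoidHom 2 : Oˣ →* Oˣ).range, n ∈ normValues f A (e.out : Oˣ) := by
  obtain ⟨M, hM, hform⟩ := h
  obtain ⟨⟨_, t, rfl⟩, ht⟩ := QuotientGroup.mk_out_eq_mul (powMonoidHom 2 : Oˣ →* Oˣ).range hM.unit
  refine ⟨hM.unit, M 0 0 * t, M 1 0 * t, ?_⟩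
  have out_eq : ((QuotientGroup.mk hM.unit : Oˣ ⧸ (powMonoidHom 2 : Oˣ →* Oˣ).range).out : O) =
      M.det * t ^ 2 := by
    simpa using congrArg Units.val ht
  rw [out_eq]
  linear_combination (t : O) ^ 2 * hform 1 0

variable {K : Type*} [Field K]

theorem exists_irreducible_not_dvd_sub_sq [CharZero K] {f A B : K[X]} (hf : Squarefree f)
    (hodd : Odd f.natDegree) (hcop : IsCoprime A f) (hAB : A ∣ B ^ 2 - f)
    (hnotsq : ¬ IsSquareClass (HypIdeal K f A B)) {ε : K} (hε : ε ≠ 0) :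
    ∃ q, Irreducible q ∧ q ∣ f ∧ ¬ ∃ p, q ∣ C ε * A - p ^ 2 := by
  by_contra! h
  obtain ⟨p, hp⟩ := exists_dvd_sub_sq_of_forall_irreducible hf h
  exact hnotsq (isSquareClass_hypIdeal hf hodd hcop hAB hε hp)

variable [NumberField K] {S : Finset (HeightOneSpectrum (𝓞 K))} {f : (𝓞 K)[X]}
  {A B C : (SInt K S)[X]}

theorem tsum_missedPrimes_normValues_eq_top (hmonic : f.Monic) (hsqfree : Squarefree f)
    (hodd : Odd f.natDegree) (hAB : A ∣ B ^ 2 - f.map (algebraMap (𝓞 K) (SInt K S)))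
    (hcop : IsCoprime (A.map (algebraMap (SInt K S) K)) (f.map (algebraMap (𝓞 K) K)))
    (hnotsq : ¬ IsSquareClass (HypIdeal K (f.map (algebraMap (𝓞 K) K))
      (A.map (algebraMap (SInt K S) K)) (B.map (algebraMap (SInt K S) K))))
    {e : SInt K S} (he : e ≠ 0) :
    ∑' ℓ : missedPrimes (normValues (f.map (algebraMap (𝓞 K) (SInt K S))) A e),
      ((ℓ.1 : ℕ) : ℝ≥0∞)⁻¹ = ⊤ := by
  have map_dvd : A.map (algebraMap (SInt K S) K) ∣
      B.map (algebraMap (SInt K S) K) ^ 2 - f.map (algebraMap (𝓞 K) K) := by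
    simpa [Polynomial.map_map, ← IsScalarTower.algebraMap_eq] using
      map_dvd (mapRingHom (algebraMap (SInt K S) K)) hAB
  obtain ⟨q, hq, hqf, hqA⟩ := exists_irreducible_not_dvd_sub_sq
    (squarefree_map_of_monic hmonic hsqfree) (by rwa [hmonic.natDegree_map]) hcop
    map_dvd hnotsq (ε := e) (by simpa using he)
  refine tsum_missedPrimes_eq_top (G := Polynomial.C e * A) hmonic hq hqf
    (by simpa using hqA) fun n hn ↦ ?_
  simpa [normValues, aeval_def, eval_map] using hn

theorem nontrivial_specializations_density_one_general (hmonic : f.Monic) (hsqfree : Squarefree f)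
    (hodd : Odd f.natDegree) {δ : Set (SInt K S) → ℝ} (hδ : IsDensity δ)
    (hrel : B ^ 2 - A * C = f.map (algebraMap (𝓞 K) (SInt K S)))
    (hcop : IsCoprime (A.map (algebraMap (SInt K S) K)) (f.map (algebraMap (𝓞 K) K)))
    (hnotsq : ¬ IsSquareClass (HypIdeal K (f.map (algebraMap (𝓞 K) K))
      (A.map (algebraMap (SInt K S) K)) (B.map (algebraMap (SInt K S) K)))) :
    δ {n | ¬ IsTrivialSpecialization (f.map (algebraMap (𝓞 K) (SInt K S))) A B C n} = 1 ∧
      {n | ¬ IsTrivialSpecialization (f.map (algebraMap (𝓞 K) (SInt K S))) A B C n}.Infinite := by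
  have hAB : A ∣ B ^ 2 - f.map (algebraMap (𝓞 K) (SInt K S)) := ⟨C, by linear_combination hrel⟩
  have hdiv {e : SInt K S} (he : e ≠ 0) :=
    tsum_missedPrimes_normValues_eq_top hmonic hsqfree hodd hAB hcop hnotsq he
  have := finite_quotient_range_powMonoidHom (G := (SInt K S)ˣ) two_ne_zero
  have trivial_null :
      δ {n | IsTrivialSpecialization (f.map (algebraMap (𝓞 K) (SInt K S))) A B C n} = 0 :=
    le_antisymm ((hδ.mono _ _ fun n hn ↦ Set.mem_iUnion.2 hn.exists_mem_normValues_out).trans_eq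
      (hδ.iUnion_eq_zero fun e ↦ hδ.eq_zero_of_tsum_missedPrimes (hdiv (Units.ne_zero _))))
      (hδ.nonneg _)
  have density_one := hδ.compl_eq_one trivial_null
  exact ⟨density_one, hδ.infinite_of_ne_zero (hδ.singleton_eq_zero (hdiv one_ne_zero))
    (ne_of_eq_of_ne density_one one_ne_zero)⟩

end Specialization

/-- **Non-trivial specializations have density 1.**
`K` a number field, `f ∈ O_K[X]` monic squarefree of odd degree `≥ 3`, `S` a
finite set of primes with `O = O_{K,S}` a PID, `δ` a density on `O`. If
`[A,2B,C]` is a primitive form over `O[X]` with `B² − AC = f`, `A` coprime to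
`f` in `K[X]`, and the class of `⟨A, Y − B⟩` in `Cl(K[X][Y]/⟨Y² − f⟩)` is not
a square, then the set of `n ∈ O` such that `[A(n), 2B(n), C(n)]` is **not**
`GL₂ᵗʷ`-equivalent over `O` to the principal form `[1, 0, −f(n)]` has density
`1`; in particular it is infinite. -/
theorem nontrivial_specializations_density_one
    (K : Type*) [Field K] [NumberField K]
    (S : Finset (HeightOneSpectrum (𝓞 K)))
    (hPID : IsPrincipalIdealRing (SInt K S))
    (f : Polynomial (𝓞 K)) (hmonic : f.Monic) (hsqfree : Squarefree f)
    (hodd : Odd f.natDegree) (hdeg : 3 ≤ f.natDegree)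
    (δ : Set (SInt K S) → ℝ)
    (hδ01 : ∀ P, 0 ≤ δ P ∧ δ P ≤ 1)
    (hδuniv : δ Set.univ = 1)
    (hδmono : ∀ P Q, P ⊆ Q → δ P ≤ δ Q)
    (hδunion : ∀ P Q, δ (P ∪ Q) ≤ δ P + δ Q)
    (hδtrans : ∀ (α : SInt K S) (P : Set (SInt K S)), δ ((α + ·) '' P) = δ P)
    (hδideal : ∀ I : Ideal (SInt K S), I ≠ ⊥ →
        δ (I : Set (SInt K S)) = 1 / (Nat.card (SInt K S ⧸ I) : ℝ))
    (A B C : Polynomial (SInt K S))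
    (hrel : B ^ 2 - A * C = f.map (algebraMap (𝓞 K) (SInt K S)))
    (hprim : Ideal.span {A, 2 * B, C} = (⊤ : Ideal (Polynomial (SInt K S))))
    (hcop : IsCoprime (A.map (algebraMap (SInt K S) K)) (f.map (algebraMap (𝓞 K) K)))
    (hnotsq : ¬ ∃ J : FractionalIdeal (HypRing K (f.map (algebraMap (𝓞 K) K)))⁰
          (FractionRing (HypRing K (f.map (algebraMap (𝓞 K) K)))),
        IsUnit J ∧
        ∃ g : FractionRing (HypRing K (f.map (algebraMap (𝓞 K) K))), g ≠ 0 ∧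
          (HypIdeal K (f.map (algebraMap (𝓞 K) K)) (A.map (algebraMap (SInt K S) K))
              (B.map (algebraMap (SInt K S) K)) :
              FractionalIdeal (HypRing K (f.map (algebraMap (𝓞 K) K)))⁰
                (FractionRing (HypRing K (f.map (algebraMap (𝓞 K) K))))) =
            spanSingleton (HypRing K (f.map (algebraMap (𝓞 K) K)))⁰ g * J ^ 2) :
    δ {n : SInt K S |
      ¬ ∃ M : Matrix (Fin 2) (Fin 2) (SInt K S), IsUnit M.det ∧
        ∀ x y : SInt K S,
          M.det * (A.eval n * x ^ 2 + 2 * B.eval n * x * y + C.eval n * y ^ 2) =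
            (M 0 0 * x + M 0 1 * y) ^ 2
              - (f.map (algebraMap (𝓞 K) (SInt K S))).eval n
                * (M 1 0 * x + M 1 1 * y) ^ 2} = 1 ∧
    {n : SInt K S |
      ¬ ∃ M : Matrix (Fin 2) (Fin 2) (SInt K S), IsUnit M.det ∧
        ∀ x y : SInt K S,
          M.det * (A.eval n * x ^ 2 + 2 * B.eval n * x * y + C.eval n * y ^ 2) =
            (M 0 0 * x + M 0 1 * y) ^ 2
              - (f.map (algebraMap (𝓞 K) (SInt K S))).eval n
                * (M 1 0 * x + M 1 1 * y) ^ 2}.Infinite :=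
  nontrivial_specializations_density_one_general hmonic hsqfree hodd
    ⟨hδ01, hδuniv, hδmono, hδunion, hδtrans, hδideal⟩ hrel hcop hnotsq
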